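/- arXiv:1504.03308 — 4 statements merged into one kernel-verified Lean document; each statement's English description precedes it below -/
import Mathlib

section
/- Existence of the rough integral of a controlled path against a rough path: Let X = (x, 𝕏) be a p-rough path with control ω on [0,T], V a Banach space, and let (y, y†) be an L(W,V)-valued rough path controlled by X on [0,T], where y†_s ∈ L(W, L(W,V)) is identified with an element of L(W ⊗ W, V). Then there exists a continuous z : [0,T] → V with z_0 = 0 and a constant C ≥ 0 such that |z_t − z_s − y_s x_{s,t} − y_s† 𝕏_{s,t}| ≤ C ω(s,t)^{3/p} for all 0 ≤ s ≤ t ≤ T. -/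
noncomputable section

open scoped BigOperators

/-- `ℝ^n` with the Euclidean norm. -/
abbrev Euc (n : ℕ) : Type := EuclideanSpace ℝ (Fin n)

/-- The `i`-th standard basis vector of `ℝ^n`. -/
def eb {n : ℕ} (i : Fin n) : Euc n := EuclideanSpace.single i 1

/-- Tensor product of two Euclidean vectors, realized in `ℝ^{n×m}` with the Euclidean norm. -/
def tensorE {n m : ℕ} (v : Euc n) (w : Euc m) : EuclideanSpace ℝ (Fin n × Fin m) :=
  (EuclideanSpace.equiv (Fin n × Fin m) ℝ).symm fun p => v p.1 * w p.2

/-- Application of the (unique) linear extension of a bilinear map `B` to a tensor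
`X ∈ ℝ^n ⊗ ℝ^m ≅ ℝ^{n × m}`. -/
def tapply {n m : ℕ} {V : Type*} [NormedAddCommGroup V] [NormedSpace ℝ V]
    (B : Euc n → Euc m → V) (X : EuclideanSpace ℝ (Fin n × Fin m)) : V :=
  ∑ q : Fin n × Fin m, X q • B (eb q.1) (eb q.2)
/-- `ω` is a control on the simplex `{(s,t) : 0 ≤ s ≤ t ≤ T}`. -/
structure IsControl (T : ℝ) (ω : ℝ → ℝ → ℝ) : Prop where
  cont : ContinuousOn (fun q : ℝ × ℝ => ω q.1 q.2)
    {q : ℝ × ℝ | 0 ≤ q.1 ∧ q.1 ≤ q.2 ∧ q.2 ≤ T}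
  nonneg : ∀ ⦃s t : ℝ⦄, 0 ≤ s → s ≤ t → t ≤ T → 0 ≤ ω s t
  zero : ∀ ⦃s : ℝ⦄, 0 ≤ s → s ≤ T → ω s s = 0
  superadditive : ∀ ⦃s t u : ℝ⦄, 0 ≤ s → s ≤ t → t ≤ u → u ≤ T → ω s t + ω t u ≤ ω s u
/-- `(x, XX)` is a `p`-rough path with control `ω` on `[0,T]`. -/
structure IsRoughPath (T p : ℝ) {k : ℕ} (ω : ℝ → ℝ → ℝ)
    (x : ℝ → Euc k) (XX : ℝ → ℝ → EuclideanSpace ℝ (Fin k × Fin k)) : Prop where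
  cont_x : ContinuousOn x (Set.Icc 0 T)
  cont_XX : ContinuousOn (fun q : ℝ × ℝ => XX q.1 q.2)
    {q : ℝ × ℝ | 0 ≤ q.1 ∧ q.1 ≤ q.2 ∧ q.2 ≤ T}
  chen : ∀ ⦃s t u : ℝ⦄, 0 ≤ s → s ≤ t → t ≤ u → u ≤ T →
    XX s u = XX s t + XX t u + tensorE (x t - x s) (x u - x t)
  bound_x : ∀ ⦃s t : ℝ⦄, 0 ≤ s → s ≤ t → t ≤ T → ‖x t - x s‖ ≤ ω s t ^ (1 / p)
  bound_XX : ∀ ⦃s t : ℝ⦄, 0 ≤ s → s ≤ t → t ≤ T → ‖XX s t‖ ≤ ω s t ^ (2 / p)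
/-- `(y, y')` is a `V`-valued rough path controlled by `X = (x, ·)` (with control `ω`)
on the interval `[a, b]`. -/
def IsCRP (p : ℝ) {k : ℕ} (ω : ℝ → ℝ → ℝ) (x : ℝ → Euc k)
    {V : Type*} [NormedAddCommGroup V] [NormedSpace ℝ V]
    (a b : ℝ) (y : ℝ → V) (y' : ℝ → Euc k →L[ℝ] V) : Prop :=
  ContinuousOn y (Set.Icc a b) ∧ ContinuousOn y' (Set.Icc a b) ∧
    ∃ C : ℝ, ∀ ⦃s t : ℝ⦄, a ≤ s → s ≤ t → t ≤ b →
      ‖y t - y s - y' s (x t - x s)‖ ≤ C * ω s t ^ (2 / p) ∧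
      ‖y' t - y' s‖ ≤ C * ω s t ^ (1 / p)

open Set Filter Topology Finset

/-!
The compensated Riemann sums of the germ `Ξ s t = y_s x_{s,t} + y'_s 𝕏_{s,t}` converge because, by
Chen's identity, its defect of additivity is
`Ξ s t - Ξ s u - Ξ u t = -(y_u - y_s - y'_s x_{s,u}) x_{u,t} - (y'_u - y'_s) 𝕏_{u,t}`,
which is of order `ω(s,t)^{3/p}` with `3/p > 1`. Sewing such a germ rests on Young's argument: every
partition has a subinterval whose removal leaves two partitions carrying at most half of `ω` each,
so Riemann sums over all partitions of `[s,t]` stay within a constant times `ω(s,t)^{3/p}` of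
`Ξ s t`.
-/

namespace IsControl

variable {T : ℝ} {ω : ℝ → ℝ → ℝ}

lemma mono (hω : IsControl T ω) {a b c d : ℝ} (ha : 0 ≤ a) (hab : a ≤ b) (hbc : b ≤ c)
    (hcd : c ≤ d) (hd : d ≤ T) : ω b c ≤ ω a d := by
  have := hω.superadditive ha hab (hbc.trans hcd) hd
  have := hω.superadditive (ha.trans hab) hbc hcd hd
  have := hω.nonneg ha hab ((hbc.trans hcd).trans hd)
  have := hω.nonneg ((ha.trans hab).trans hbc) hcd hd
  linarith

lemma rpow_mono (hω : IsControl T ω) {a b c d q : ℝ} (ha : 0 ≤ a) (hab : a ≤ b) (hbc : b ≤ c)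
    (hcd : c ≤ d) (hd : d ≤ T) (hq : 0 ≤ q) : ω b c ^ q ≤ ω a d ^ q :=
  Real.rpow_le_rpow (hω.nonneg (ha.trans hab) hbc (hcd.trans hd)) (hω.mono ha hab hbc hcd hd) hq

lemma rpow_nonneg (hω : IsControl T ω) {s t : ℝ} (hs : 0 ≤ s) (hst : s ≤ t) (ht : t ≤ T)
    (q : ℝ) : 0 ≤ ω s t ^ q :=
  Real.rpow_nonneg (hω.nonneg hs hst ht) q

lemma exists_forall_sub_lt_imp_lt (hω : IsControl T ω) {ε : ℝ} (hε : 0 < ε) :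
    ∃ δ > 0, ∀ ⦃s t : ℝ⦄, 0 ≤ s → s ≤ t → t ≤ T → t - s < δ → ω s t < ε := by
  have hcompact : IsCompact {q : ℝ × ℝ | 0 ≤ q.1 ∧ q.1 ≤ q.2 ∧ q.2 ≤ T} := by
    refine (isCompact_Icc (a := ((0 : ℝ), (0 : ℝ))) (b := (T, T))).of_isClosed_subset ?_ ?_
    · exact (isClosed_le continuous_const continuous_fst).inter
        ((isClosed_le continuous_fst continuous_snd).inter
          (isClosed_le continuous_snd continuous_const))
    · rintro ⟨s, t⟩ ⟨hs, hst, ht⟩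
      exact ⟨⟨hs, hs.trans hst⟩, ⟨hst.trans ht, ht⟩⟩
  obtain ⟨δ, hδ, hclose⟩ := Metric.uniformContinuousOn_iff.mp
    (hcompact.uniformContinuousOn_of_continuous hω.cont) ε hε
  refine ⟨δ, hδ, fun s t hs hst ht hlt => ?_⟩
  have hdist : dist (s, t) (s, s) < δ := by
    simpa [Prod.dist_eq, Real.dist_eq, abs_of_nonneg (sub_nonneg.mpr hst), hδ] using hlt
  have hω_dist := hclose (s, t) ⟨hs, hst, ht⟩ (s, s) ⟨hs, le_rfl, hst.trans ht⟩ hdist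
  rw [hω.zero hs (hst.trans ht), Real.dist_0_eq_abs] at hω_dist
  exact (le_abs_self _).trans_lt hω_dist

lemma tendsto_min_max (hω : IsControl T ω) {b : ℝ} (hb : b ∈ Icc 0 T) :
    Tendsto (fun t => ω (min b t) (max b t)) (𝓝[Icc 0 T] b) (𝓝 0) := by
  have hcont : ContinuousOn (fun t => ω (min b t) (max b t)) (Icc 0 T) :=
    hω.cont.comp (f := fun t => (min b t, max b t)) (by fun_prop) fun t ht =>
      ⟨le_min hb.1 ht.1, min_le_max, max_le hb.2 ht.2⟩
  simpa only [ContinuousWithinAt, min_self, max_self, hω.zero hb.1 hb.2] using hcont b hb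

lemma continuousOn_of_norm_sub_le {V : Type*} [NormedAddCommGroup V] (hω : IsControl T ω)
    {f : ℝ → V} {φ : ℝ → ℝ} (hφ : Tendsto φ (𝓝 0) (𝓝 0))
    (hf : ∀ ⦃s t : ℝ⦄, 0 ≤ s → s ≤ t → t ≤ T → ‖f t - f s‖ ≤ φ (ω s t)) :
    ContinuousOn f (Icc 0 T) := by
  intro b hb
  refine tendsto_iff_norm_sub_tendsto_zero.mpr <|
    squeeze_zero' (.of_forall fun _ => norm_nonneg _) ?_ (hφ.comp (hω.tendsto_min_max hb))
  filter_upwards [self_mem_nhdsWithin] with t ht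
  rcases le_total b t with hbt | htb
  · simpa [hbt] using hf hb.1 hbt ht.2
  · simpa [htb, norm_sub_rev] using hf ht.1 htb hb.2

section Partition

variable {a : ℕ → ℝ}

lemma sum_le (hω : IsControl T ω) (ha : Monotone a) (haT : ∀ i, a i ∈ Icc 0 T) (n : ℕ) :
    ∑ i ∈ range n, ω (a i) (a (i + 1)) ≤ ω (a 0) (a n) := by
  induction n with
  | zero => simp [hω.zero (haT 0).1 (haT 0).2]
  | succ n ih =>
    rw [sum_range_succ]
    linarith [hω.superadditive (haT 0).1 (ha n.zero_le) (ha n.le_succ) (haT (n + 1)).2]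

lemma exists_forall_sum_rpow_lt (hω : IsControl T ω) {θ ε : ℝ} (hθ : 1 < θ) (hε : 0 < ε) :
    ∃ δ > 0, ∀ ⦃a : ℕ → ℝ⦄, Monotone a → (∀ i, a i ∈ Icc 0 T) →
      (∀ i, a (i + 1) - a i < δ) → ∀ n, ∑ i ∈ range n, ω (a i) (a (i + 1)) ^ θ < ε := by
  have hlim : Tendsto (fun η : ℝ => ω 0 T * η ^ (θ - 1)) (𝓝[>] 0) (𝓝 0) := by
    have hpow := (Real.continuousAt_rpow_const 0 (θ - 1) (.inr (by linarith))).tendsto.const_mul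
      (ω 0 T)
    rw [Real.zero_rpow (by linarith), mul_zero] at hpow
    exact hpow.mono_left nhdsWithin_le_nhds
  obtain ⟨η, hηε, hη : 0 < η⟩ :=
    ((hlim.eventually (gt_mem_nhds hε)).and self_mem_nhdsWithin).exists
  obtain ⟨δ, hδ, hsmall⟩ := hω.exists_forall_sub_lt_imp_lt hη
  refine ⟨δ, hδ, fun a ha haT hmesh n => lt_of_le_of_lt ?_ hηε⟩
  have hterm (i : ℕ) : ω (a i) (a (i + 1)) ^ θ ≤ ω (a i) (a (i + 1)) * η ^ (θ - 1) := by
    have hnonneg := hω.nonneg (haT i).1 (ha i.le_succ) (haT (i + 1)).2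
    calc ω (a i) (a (i + 1)) ^ θ
        = ω (a i) (a (i + 1)) * ω (a i) (a (i + 1)) ^ (θ - 1) := by
          rw [← Real.rpow_one_add' hnonneg (by linarith), add_sub_cancel]
      _ ≤ ω (a i) (a (i + 1)) * η ^ (θ - 1) := by
          have hle := (hsmall (haT i).1 (ha i.le_succ) (haT (i + 1)).2 (hmesh i)).le
          exact mul_le_mul_of_nonneg_left (Real.rpow_le_rpow hnonneg hle (by linarith)) hnonneg
  calc ∑ i ∈ range n, ω (a i) (a (i + 1)) ^ θ
      ≤ (∑ i ∈ range n, ω (a i) (a (i + 1))) * η ^ (θ - 1) := by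
        rw [sum_mul]
        exact sum_le_sum fun i _ => hterm i
    _ ≤ ω 0 T * η ^ (θ - 1) := by
        gcongr
        exact (hω.sum_le ha haT n).trans
          (hω.mono le_rfl (haT 0).1 (ha n.zero_le) (haT n).2 le_rfl)

lemma exists_bisection (hω : IsControl T ω) (ha : Monotone a) (haT : ∀ i, a i ∈ Icc 0 T)
    {n : ℕ} (hn : 0 < n) :
    ∃ j r, n = j + 1 + r ∧ ω (a 0) (a j) ≤ ω (a 0) (a n) / 2 ∧
      ω (a (j + 1)) (a n) ≤ ω (a 0) (a n) / 2 := by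
  classical
  set w := ω (a 0) (a n)
  have hw : 0 ≤ w := hω.nonneg (haT 0).1 (ha n.zero_le) (haT n).2
  let P : ℕ → Prop := fun j => ω (a 0) (a j) ≤ w / 2
  have hP_zero : P 0 := by
    change ω (a 0) (a 0) ≤ w / 2
    rw [hω.zero (haT 0).1 (haT 0).2]
    positivity
  set j := Nat.findGreatest P (n - 1)
  have hjn : j + 1 ≤ n := by
    have : j ≤ n - 1 := Nat.findGreatest_le _
    lia
  refine ⟨j, n - (j + 1), by lia, Nat.findGreatest_spec (P := P) (Nat.zero_le _) hP_zero, ?_⟩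
  rcases hjn.eq_or_lt with hlast | hlt
  · rw [hlast, hω.zero (haT n).1 (haT n).2]
    positivity
  · have hnext : w / 2 < ω (a 0) (a (j + 1)) :=
      not_le.mp (Nat.findGreatest_is_greatest (P := P) j.lt_succ_self (Nat.le_sub_one_of_lt hlt))
    linarith [hω.superadditive (haT 0).1 (ha (j + 1).zero_le) (ha hjn) (haT n).2]

end Partition

end IsControl

section Sewing

variable {V : Type*} [NormedAddCommGroup V] {T C θ : ℝ} {ω : ℝ → ℝ → ℝ} {Ξ : ℝ → ℝ → V}

/-- The hypothesis of the sewing lemma: the two-parameter map `Ξ` is additive on `[0, T]` up to an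
error `C * ω ^ θ`. -/
def IsAlmostAdditive (T C θ : ℝ) (ω : ℝ → ℝ → ℝ) (Ξ : ℝ → ℝ → V) : Prop :=
  ∀ ⦃s u t : ℝ⦄, 0 ≤ s → s ≤ u → u ≤ t → t ≤ T → ‖Ξ s t - Ξ s u - Ξ u t‖ ≤ C * ω s t ^ θ

/-- The Riemann sum of `Ξ` over the partition `a 0 ≤ a 1 ≤ ⋯ ≤ a n`; only the first `n + 1` terms
of the sequence `a` matter. -/
def riemannSum (Ξ : ℝ → ℝ → V) (a : ℕ → ℝ) (n : ℕ) : V :=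
  ∑ i ∈ range n, Ξ (a i) (a (i + 1))

lemma riemannSum_add (Ξ : ℝ → ℝ → V) (a : ℕ → ℝ) (m n : ℕ) :
    riemannSum Ξ a (m + n) = riemannSum Ξ a m + riemannSum Ξ (fun i => a (m + i)) n :=
  sum_range_add _ m n

lemma riemannSum_succ (Ξ : ℝ → ℝ → V) (a : ℕ → ℝ) (n : ℕ) :
    riemannSum Ξ a (n + 1) = riemannSum Ξ a n + Ξ (a n) (a (n + 1)) :=
  sum_range_succ _ n

/-- The constant of the sewing lemma, the solution `K` of `K = 2 * (K * 2 ^ (-θ) + C)`; it is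
meaningful for `1 < θ`. -/
def sewingConst (C θ : ℝ) : ℝ := 2 * C / (1 - 2 * (1 / 2) ^ θ)

lemma two_mul_half_rpow_lt_one (hθ : 1 < θ) : 2 * (1 / 2 : ℝ) ^ θ < 1 := by
  have := Real.rpow_lt_rpow_of_exponent_gt (x := (1 / 2 : ℝ)) (by norm_num) (by norm_num) hθ
  rw [Real.rpow_one] at this
  linarith

lemma sewingConst_nonneg (hC : 0 ≤ C) (hθ : 1 < θ) : 0 ≤ sewingConst C θ :=
  div_nonneg (by positivity) (sub_nonneg.mpr (two_mul_half_rpow_lt_one hθ).le)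

lemma sewingConst_eq (C : ℝ) (hθ : 1 < θ) :
    2 * (sewingConst C θ * (1 / 2) ^ θ + C) = sewingConst C θ := by
  have : 1 - 2 * (1 / 2 : ℝ) ^ θ ≠ 0 := (sub_pos.mpr (two_mul_half_rpow_lt_one hθ)).ne'
  unfold sewingConst
  field_simp
  ring

lemma mul_rpow_le_of_le_half {K v w : ℝ} (hK : 0 ≤ K) (hθ : 0 ≤ θ) (hv : 0 ≤ v)
    (hvw : v ≤ w / 2) : K * v ^ θ ≤ K * (1 / 2) ^ θ * w ^ θ := by
  rw [mul_assoc, ← Real.mul_rpow (by norm_num) (by linarith), one_div_mul_eq_div]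
  gcongr

/-- The `i`-th point of the `n`-th dyadic partition of `[0, T]`, stopped at time `t`. Stopping one
global partition, instead of subdividing each `[0, t]`, makes the Riemann sums over `[0, s]` and
`[0, t]` share their points. -/
def stoppedGrid (T t : ℝ) (n i : ℕ) : ℝ := min t (i * (T / 2 ^ n))

section StoppedGrid

variable {s t : ℝ}

lemma stoppedGrid_monotone (hT : 0 ≤ T) (t : ℝ) (n : ℕ) : Monotone (stoppedGrid T t n) :=
  fun i j hij => by unfold stoppedGrid; gcongr

lemma stoppedGrid_mem_Icc (ht : t ∈ Icc 0 T) (n i : ℕ) : stoppedGrid T t n i ∈ Icc 0 T :=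
  have hT : 0 ≤ T := ht.1.trans ht.2
  ⟨le_min ht.1 (by positivity), (min_le_left _ _).trans ht.2⟩

lemma stoppedGrid_zero (T : ℝ) (ht : 0 ≤ t) (n : ℕ) : stoppedGrid T t n 0 = 0 := by
  simp [stoppedGrid, ht]

lemma stoppedGrid_two_pow (ht : t ≤ T) (n : ℕ) : stoppedGrid T t n (2 ^ n) = t := by
  simp [stoppedGrid, mul_div_cancel₀, ht]

lemma stoppedGrid_succ_sub_le (hT : 0 ≤ T) (t : ℝ) (n i : ℕ) :
    stoppedGrid T t n (i + 1) - stoppedGrid T t n i ≤ T / 2 ^ n := by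
  have hstep : 0 ≤ T / 2 ^ n := by positivity
  have hsucc : ((i + 1 : ℕ) : ℝ) * (T / 2 ^ n) = i * (T / 2 ^ n) + T / 2 ^ n := by
    push_cast
    ring
  unfold stoppedGrid
  rw [hsucc, sub_le_iff_le_add', ← min_add_add_right]
  exact min_le_min_right _ (le_add_of_nonneg_right hstep)

lemma stoppedGrid_add_mul_two_pow (T t : ℝ) (n m i : ℕ) :
    stoppedGrid T t (n + m) (i * 2 ^ m) = stoppedGrid T t n i := by
  unfold stoppedGrid
  congr 1
  push_cast
  rw [pow_add]
  field_simp

lemma min_stoppedGrid (hst : s ≤ t) (n i : ℕ) :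
    min s (stoppedGrid T t n i) = stoppedGrid T s n i := by
  rw [stoppedGrid, stoppedGrid, ← min_assoc, min_eq_left hst]

lemma IsControl.tendsto_sum_rpow_stoppedGrid (hω : IsControl T ω) (hθ : 1 < θ)
    (ht : t ∈ Icc 0 T) :
    Tendsto (fun n => ∑ i ∈ range (2 ^ n),
      ω (stoppedGrid T t n i) (stoppedGrid T t n (i + 1)) ^ θ) atTop (𝓝 0) := by
  have hT : 0 ≤ T := ht.1.trans ht.2
  have hmesh : Tendsto (fun n : ℕ => T / 2 ^ n) atTop (𝓝 0) := by
    simpa [div_eq_mul_inv] using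
      (tendsto_pow_atTop_nhds_zero_of_lt_one (r := (2⁻¹ : ℝ)) (by norm_num) (by norm_num)).const_mul
        T
  refine Metric.tendsto_nhds.mpr fun ε hε => ?_
  obtain ⟨δ, hδ, hsum⟩ := hω.exists_forall_sum_rpow_lt hθ hε
  filter_upwards [hmesh.eventually (gt_mem_nhds hδ)] with n hn
  rw [Real.dist_0_eq_abs, abs_of_nonneg (sum_nonneg fun i _ => hω.rpow_nonneg
    (stoppedGrid_mem_Icc ht n i).1 (stoppedGrid_monotone hT t n i.le_succ)
    (stoppedGrid_mem_Icc ht n (i + 1)).2 θ)]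
  exact hsum (stoppedGrid_monotone hT t n) (stoppedGrid_mem_Icc ht n)
    (fun i => (stoppedGrid_succ_sub_le hT t n i).trans_lt hn) _

end StoppedGrid

namespace IsAlmostAdditive

variable {a : ℕ → ℝ} {s t : ℝ}

lemma apply_self (hΞ : IsAlmostAdditive T C θ ω Ξ) (hω : IsControl T ω) (hθ : 0 < θ)
    (hs : s ∈ Icc 0 T) : Ξ s s = 0 := by
  simpa [hω.zero hs.1 hs.2, Real.zero_rpow hθ.ne'] using hΞ hs.1 le_rfl le_rfl hs.2

lemma norm_add_add_sub_le (hΞ : IsAlmostAdditive T C θ ω Ξ) (hω : IsControl T ω) (hθ : 0 ≤ θ)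
    (hC : 0 ≤ C) {u v : ℝ} (hs : 0 ≤ s) (hsu : s ≤ u) (huv : u ≤ v) (hvt : v ≤ t) (ht : t ≤ T) :
    ‖Ξ s u + Ξ u v + Ξ v t - Ξ s t‖ ≤ 2 * C * ω s t ^ θ := by
  have hsplit : Ξ s u + Ξ u v + Ξ v t - Ξ s t =
      -(Ξ s t - Ξ s u - Ξ u t) - (Ξ u t - Ξ u v - Ξ v t) := by abel
  have hinner : C * ω u t ^ θ ≤ C * ω s t ^ θ :=
    mul_le_mul_of_nonneg_left (hω.rpow_mono hs hsu (huv.trans hvt) le_rfl ht hθ) hC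
  rw [hsplit]
  refine (norm_sub_le _ _).trans ?_
  rw [norm_neg]
  linarith [hΞ hs hsu (huv.trans hvt) ht, hΞ (hs.trans hsu) huv hvt ht]

theorem norm_riemannSum_sub_le (hΞ : IsAlmostAdditive T C θ ω Ξ) (hω : IsControl T ω)
    (hθ : 1 < θ) (hC : 0 ≤ C) (ha : Monotone a) (haT : ∀ i, a i ∈ Icc 0 T) (n : ℕ) :
    ‖riemannSum Ξ a n - Ξ (a 0) (a n)‖ ≤ sewingConst C θ * ω (a 0) (a n) ^ θ := by
  induction n using Nat.strong_induction_on generalizing a with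
  | _ n ih =>
    have hθ0 : 0 < θ := one_pos.trans hθ
    have hK := sewingConst_nonneg hC hθ
    set w := ω (a 0) (a n) with hw
    have hw0 : 0 ≤ w := hω.nonneg (haT 0).1 (ha n.zero_le) (haT n).2
    rcases n.eq_zero_or_pos with rfl | hn
    · simp only [riemannSum, range_zero, sum_empty, hΞ.apply_self hω hθ0 (haT 0), sub_zero,
        norm_zero]
      positivity
    obtain ⟨j, r, rfl, hleft, hright⟩ := hω.exists_bisection ha haT hn
    have ih_left := (ih j (by lia) ha haT).trans
      (mul_rpow_le_of_le_half hK hθ0.le (hω.nonneg (haT 0).1 (ha j.zero_le) (haT j).2) hleft)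
    have ih_right := (ih r (by lia) (a := fun i => a (j + 1 + i))
      (fun _ _ h => ha (Nat.add_le_add_left h _)) (fun i => haT _)).trans
      (mul_rpow_le_of_le_half hK hθ0.le (hω.nonneg (haT _).1 (ha (by lia)) (haT _).2) hright)
    have hmid := hΞ.norm_add_add_sub_le hω hθ0.le hC (haT 0).1 (ha j.zero_le) (ha j.le_succ)
      (ha (Nat.le_add_right (j + 1) r)) (haT _).2
    have hsplit : riemannSum Ξ a (j + 1 + r) - Ξ (a 0) (a (j + 1 + r)) =
        (riemannSum Ξ a j - Ξ (a 0) (a j)) +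
        (riemannSum Ξ (fun i => a (j + 1 + i)) r - Ξ (a (j + 1)) (a (j + 1 + r))) +
        (Ξ (a 0) (a j) + Ξ (a j) (a (j + 1)) + Ξ (a (j + 1)) (a (j + 1 + r)) -
          Ξ (a 0) (a (j + 1 + r))) := by
      rw [riemannSum_add, riemannSum_succ]
      abel
    calc ‖riemannSum Ξ a (j + 1 + r) - Ξ (a 0) (a (j + 1 + r))‖
        ≤ sewingConst C θ * (1 / 2) ^ θ * w ^ θ + sewingConst C θ * (1 / 2) ^ θ * w ^ θ +
            2 * C * w ^ θ := by
          rw [hsplit]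
          exact norm_add₃_le.trans (add_le_add (add_le_add ih_left ih_right) hmid)
      _ = 2 * (sewingConst C θ * (1 / 2) ^ θ + C) * w ^ θ := by ring
      _ = sewingConst C θ * w ^ θ := by rw [sewingConst_eq C hθ]

lemma norm_riemannSum_sub_subsequence_le (hΞ : IsAlmostAdditive T C θ ω Ξ) (hω : IsControl T ω)
    (hθ : 1 < θ) (hC : 0 ≤ C) (ha : Monotone a) (haT : ∀ i, a i ∈ Icc 0 T) (m n : ℕ) :
    ‖riemannSum Ξ a (n * m) - riemannSum Ξ (fun i => a (i * m)) n‖ ≤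
      sewingConst C θ * ∑ i ∈ range n, ω (a (i * m)) (a ((i + 1) * m)) ^ θ := by
  induction n with
  | zero => simp [riemannSum]
  | succ n ih =>
    have hblock := hΞ.norm_riemannSum_sub_le hω hθ hC (a := fun i => a (n * m + i))
      (fun _ _ h => ha (Nat.add_le_add_left h _)) (fun i => haT _) m
    rw [add_zero, ← Nat.succ_mul] at hblock
    rw [Nat.succ_mul, riemannSum_add, riemannSum_succ, add_sub_add_comm, sum_range_succ, mul_add]
    exact norm_add_le_of_le ih hblock

lemma norm_sub_min_sub_max_le (hΞ : IsAlmostAdditive T C θ ω Ξ) (hω : IsControl T ω)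
    (hθ : 0 < θ) (hC : 0 ≤ C) (hs : s ∈ Icc 0 T) {u v : ℝ} (hu : 0 ≤ u) (huv : u ≤ v)
    (hv : v ≤ T) :
    ‖Ξ u v - Ξ (min s u) (min s v) - Ξ (max s u) (max s v)‖ ≤ C * ω u v ^ θ := by
  have hss := hΞ.apply_self hω hθ hs
  have hnonneg : 0 ≤ C * ω u v ^ θ := mul_nonneg hC (hω.rpow_nonneg hu huv hv θ)
  rcases le_total v s with hvs | hsv
  · simpa [hvs, huv.trans hvs, hss] using hnonneg
  rcases le_total s u with hsu | hus
  · simpa [hsu, hsv, hss] using hnonneg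
  · simpa [hus, hsv] using hΞ hu hus hsv hv

lemma norm_riemannSum_stoppedGrid_sub_le (hΞ : IsAlmostAdditive T C θ ω Ξ) (hω : IsControl T ω)
    (hθ : 1 < θ) (hC : 0 ≤ C) (hs : 0 ≤ s) (hst : s ≤ t) (ht : t ≤ T) (n : ℕ) :
    ‖riemannSum Ξ (stoppedGrid T t n) (2 ^ n) - riemannSum Ξ (stoppedGrid T s n) (2 ^ n) - Ξ s t‖ ≤
      sewingConst C θ * ω s t ^ θ + C * ∑ i ∈ range (2 ^ n),
        ω (stoppedGrid T t n i) (stoppedGrid T t n (i + 1)) ^ θ := by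
  set g := stoppedGrid T t n with hg
  have hsT : s ∈ Icc 0 T := ⟨hs, hst.trans ht⟩
  have htT : t ∈ Icc 0 T := ⟨hs.trans hst, ht⟩
  have hg_mono : Monotone g := stoppedGrid_monotone (htT.1.trans ht) t n
  have hgT : ∀ i, g i ∈ Icc 0 T := stoppedGrid_mem_Icc htT n
  have hafter := hΞ.norm_riemannSum_sub_le hω hθ hC (a := fun i => max s (g i))
    (fun _ _ h => max_le_max_left s (hg_mono h))
    (fun i => ⟨hs.trans (le_max_left _ _), max_le hsT.2 (hgT i).2⟩) (2 ^ n)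
  rw [hg, stoppedGrid_zero T htT.1, stoppedGrid_two_pow ht, max_eq_left hs, max_eq_right hst,
    ← hg] at hafter
  have hcut : ‖riemannSum Ξ g (2 ^ n) - riemannSum Ξ (stoppedGrid T s n) (2 ^ n) -
      riemannSum Ξ (fun i => max s (g i)) (2 ^ n)‖ ≤
      C * ∑ i ∈ range (2 ^ n), ω (g i) (g (i + 1)) ^ θ := by
    simp only [riemannSum, ← sum_sub_distrib, mul_sum, ← min_stoppedGrid hst, ← hg]
    exact norm_sum_le_of_le _ fun i _ => hΞ.norm_sub_min_sub_max_le hω (one_pos.trans hθ) hC hsT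
      (hgT i).1 (hg_mono i.le_succ) (hgT (i + 1)).2
  refine le_trans (le_of_eq ?_) (norm_add_le_of_le hafter hcut)
  congr 1
  abel

lemma cauchySeq_riemannSum_stoppedGrid (hΞ : IsAlmostAdditive T C θ ω Ξ) (hω : IsControl T ω)
    (hθ : 1 < θ) (hC : 0 ≤ C) (ht : t ∈ Icc 0 T) :
    CauchySeq fun n => riemannSum Ξ (stoppedGrid T t n) (2 ^ n) := by
  have herror := (hω.tendsto_sum_rpow_stoppedGrid hθ ht).const_mul (sewingConst C θ)
  rw [mul_zero] at herror
  refine Metric.cauchySeq_iff'.mpr fun ε hε => ?_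
  obtain ⟨N, hN⟩ := (herror.eventually (gt_mem_nhds hε)).exists
  refine ⟨N, fun n hn => ?_⟩
  obtain ⟨m, rfl⟩ := Nat.exists_eq_add_of_le hn
  have hrefine := hΞ.norm_riemannSum_sub_subsequence_le hω hθ hC
    (stoppedGrid_monotone (ht.1.trans ht.2) t (N + m)) (stoppedGrid_mem_Icc ht (N + m))
    (2 ^ m) (2 ^ N)
  simp only [stoppedGrid_add_mul_two_pow, ← pow_add] at hrefine
  rw [dist_eq_norm]
  exact hrefine.trans_lt hN

theorem exists_sewing [CompleteSpace V] (hΞ : IsAlmostAdditive T C θ ω Ξ) (hω : IsControl T ω)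
    (hθ : 1 < θ) (hC : 0 ≤ C) :
    ∃ z : ℝ → V, z 0 = 0 ∧ ∀ ⦃s t : ℝ⦄, 0 ≤ s → s ≤ t → t ≤ T →
      ‖z t - z s - Ξ s t‖ ≤ sewingConst C θ * ω s t ^ θ := by
  have hconv (t : ℝ) (ht : t ∈ Icc 0 T) :
      ∃ l, Tendsto (fun n => riemannSum Ξ (stoppedGrid T t n) (2 ^ n)) atTop (𝓝 l) :=
    cauchySeq_tendsto_of_complete (hΞ.cauchySeq_riemannSum_stoppedGrid hω hθ hC ht)
  choose! z hz using hconv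
  refine ⟨fun t => z t - z 0, sub_self _, fun s t hs hst ht => ?_⟩
  have hsT : s ∈ Icc 0 T := ⟨hs, hst.trans ht⟩
  have htT : t ∈ Icc 0 T := ⟨hs.trans hst, ht⟩
  have hbound := ((hω.tendsto_sum_rpow_stoppedGrid hθ htT).const_mul C).const_add
    (sewingConst C θ * ω s t ^ θ)
  rw [mul_zero, add_zero] at hbound
  rw [sub_sub_sub_cancel_right]
  exact le_of_tendsto_of_tendsto' (((hz t htT).sub (hz s hsT)).sub_const (Ξ s t)).norm hbound
    (hΞ.norm_riemannSum_stoppedGrid_sub_le hω hθ hC hs hst ht)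

end IsAlmostAdditive

end Sewing

section RoughIntegral

-- The norm of `Λ` below lives on a nested operator space beyond the default instance depth.
set_option maxSynthPendingDepth 3

variable {W E V : Type*} [NormedAddCommGroup W] [NormedSpace ℝ W] [NormedAddCommGroup E]
  [NormedSpace ℝ E] [NormedAddCommGroup V] [NormedSpace ℝ V] {T p C : ℝ} {ω : ℝ → ℝ → ℝ}

/-- A `p`-rough path in an arbitrary normed space `W`. The second level takes values in a normed
space `E`, and `τ v w : E` stands for `v ⊗ w`; for instance, `E` may be the projective tensor
product of `W` with itself. -/
structure IsTensorRoughPath (T p : ℝ) (ω : ℝ → ℝ → ℝ) (τ : W → W → E) (x : ℝ → W)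
    (XX : ℝ → ℝ → E) : Prop where
  chen : ∀ ⦃s t u : ℝ⦄, 0 ≤ s → s ≤ t → t ≤ u → u ≤ T →
    XX s u = XX s t + XX t u + τ (x t - x s) (x u - x t)
  bound_x : ∀ ⦃s t : ℝ⦄, 0 ≤ s → s ≤ t → t ≤ T → ‖x t - x s‖ ≤ ω s t ^ (1 / p)
  bound_XX : ∀ ⦃s t : ℝ⦄, 0 ≤ s → s ≤ t → t ≤ T → ‖XX s t‖ ≤ ω s t ^ (2 / p)

/-- `(y, y')` is controlled on `[0, T]` by the path `x` in an arbitrary normed space `W`, with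
constant `C`. -/
def IsControlledPath (T p C : ℝ) (ω : ℝ → ℝ → ℝ) (x : ℝ → W) (y : ℝ → V)
    (y' : ℝ → W →L[ℝ] V) : Prop :=
  ∀ ⦃s t : ℝ⦄, 0 ≤ s → s ≤ t → t ≤ T →
    ‖y t - y s - y' s (x t - x s)‖ ≤ C * ω s t ^ (2 / p) ∧ ‖y' t - y' s‖ ≤ C * ω s t ^ (1 / p)

/-- The germ `y_s x_{s,t} + y'_s 𝕏_{s,t}` of the rough integral. The map `Λ` is the identification
of `L(W, L(W, V))` with `L(W ⊗ W, V)`, where `E` stands for `W ⊗ W`. -/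
def roughGerm (Λ : (W →L[ℝ] W →L[ℝ] V) →L[ℝ] E →L[ℝ] V) (x : ℝ → W) (XX : ℝ → ℝ → E)
    (y : ℝ → W →L[ℝ] V) (y' : ℝ → W →L[ℝ] W →L[ℝ] V) (s t : ℝ) : V :=
  y s (x t - x s) + Λ (y' s) (XX s t)

lemma tendsto_const_mul_rpow_nhds_zero (K : ℝ) {q : ℝ} (hq : 0 < q) :
    Tendsto (fun r : ℝ => K * r ^ q) (𝓝 0) (𝓝 0) := by
  simpa [Real.zero_rpow hq.ne'] using
    ((Real.continuous_rpow_const hq.le).tendsto 0).const_mul K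

namespace IsControlledPath

variable {x : ℝ → W} {y : ℝ → V} {y' : ℝ → W →L[ℝ] V}

lemma mono {C' : ℝ} (hy : IsControlledPath T p C ω x y y') (hω : IsControl T ω) (hC : C ≤ C') :
    IsControlledPath T p C' ω x y y' := fun _ _ hs hst ht =>
  have hω0 := hω.rpow_nonneg hs hst ht
  ⟨(hy hs hst ht).1.trans (mul_le_mul_of_nonneg_right hC (hω0 _)),
    (hy hs hst ht).2.trans (mul_le_mul_of_nonneg_right hC (hω0 _))⟩

lemma exists_norm_deriv_le (hy : IsControlledPath T p C ω x y y') (hω : IsControl T ω)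
    (hp : 0 < p) : ∃ M, ∀ t ∈ Icc 0 T, ‖y' t‖ ≤ M :=
  isCompact_Icc.exists_bound_of_continuousOn <|
    hω.continuousOn_of_norm_sub_le (tendsto_const_mul_rpow_nhds_zero C (one_div_pos.mpr hp))
      fun _ _ hs hst ht => (hy hs hst ht).2

lemma exists_norm_le (hy : IsControlledPath T p C ω x y y') (hω : IsControl T ω) (hp : 0 < p)
    (hx : ∀ ⦃s t : ℝ⦄, 0 ≤ s → s ≤ t → t ≤ T → ‖x t - x s‖ ≤ ω s t ^ (1 / p)) :
    ∃ M, ∀ t ∈ Icc 0 T, ‖y t‖ ≤ M := by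
  obtain ⟨M, hM⟩ := hy.exists_norm_deriv_le hω hp
  have hφ := (tendsto_const_mul_rpow_nhds_zero C (div_pos two_pos hp)).add
    (tendsto_const_mul_rpow_nhds_zero M (one_div_pos.mpr hp))
  rw [add_zero] at hφ
  refine isCompact_Icc.exists_bound_of_continuousOn <|
    hω.continuousOn_of_norm_sub_le hφ fun s t hs hst ht => ?_
  rw [← sub_add_cancel (y t - y s) (y' s (x t - x s))]
  exact norm_add_le_of_le (hy hs hst ht).1
    ((y' s).le_of_opNorm_le_of_le (hM s ⟨hs, hst.trans ht⟩) (hx hs hst ht))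

end IsControlledPath

variable {τ : W → W → E} {Λ : (W →L[ℝ] W →L[ℝ] V) →L[ℝ] E →L[ℝ] V} {x : ℝ → W}
  {XX : ℝ → ℝ → E} {y : ℝ → W →L[ℝ] V} {y' : ℝ → W →L[ℝ] W →L[ℝ] V}

lemma roughGerm_sub_sub (hΛ : ∀ B v w, Λ B (τ v w) = B v w) {s u t : ℝ}
    (hchen : XX s t = XX s u + XX u t + τ (x u - x s) (x t - x u)) :
    roughGerm Λ x XX y y' s t - roughGerm Λ x XX y y' s u - roughGerm Λ x XX y y' u t =
      -((y u - y s - y' s (x u - x s)) (x t - x u)) - Λ (y' u - y' s) (XX u t) := by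
  have hadd : x t - x s = (x u - x s) + (x t - x u) := by abel
  simp only [roughGerm, hchen, hadd, map_add, map_sub, hΛ, sub_apply]
  abel

theorem isAlmostAdditive_roughGerm (hω : IsControl T ω) (hp : 0 < p) (hC : 0 ≤ C)
    (hX : IsTensorRoughPath T p ω τ x XX) (hΛ : ∀ B v w, Λ B (τ v w) = B v w)
    (hy : IsControlledPath T p C ω x y y') :
    IsAlmostAdditive T (C + ‖Λ‖ * C) (3 / p) ω (roughGerm Λ x XX y y') := by
  intro s u t hs hsu hut ht
  have hu : 0 ≤ u := hs.trans hsu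
  have huT : u ≤ T := hut.trans ht
  have hω_left {q : ℝ} (hq : 0 ≤ q) : ω s u ^ q ≤ ω s t ^ q :=
    hω.rpow_mono hs le_rfl hsu hut ht hq
  have hω_right {q : ℝ} (hq : 0 ≤ q) : ω u t ^ q ≤ ω s t ^ q :=
    hω.rpow_mono hs hsu hut le_rfl ht hq
  have hexp : ω s t ^ (3 / p) = ω s t ^ (2 / p) * ω s t ^ (1 / p) := by
    rw [← Real.rpow_add_of_nonneg (hω.nonneg hs (hsu.trans hut) ht) (by positivity) (by positivity)]
    congr 1
    ring
  have hremainder : ‖y u - y s - y' s (x u - x s)‖ ≤ C * ω s t ^ (2 / p) :=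
    (hy hs hsu huT).1.trans (mul_le_mul_of_nonneg_left (hω_left (by positivity)) hC)
  have hderiv : ‖y' u - y' s‖ ≤ C * ω s t ^ (1 / p) :=
    (hy hs hsu huT).2.trans (mul_le_mul_of_nonneg_left (hω_left (by positivity)) hC)
  have hx : ‖x t - x u‖ ≤ ω s t ^ (1 / p) :=
    (hX.bound_x hu hut ht).trans (hω_right (by positivity))
  have hXX : ‖XX u t‖ ≤ ω s t ^ (2 / p) :=
    (hX.bound_XX hu hut ht).trans (hω_right (by positivity))
  rw [roughGerm_sub_sub hΛ (hX.chen hs hsu hut ht)]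
  calc ‖-((y u - y s - y' s (x u - x s)) (x t - x u)) - Λ (y' u - y' s) (XX u t)‖
      ≤ C * ω s t ^ (2 / p) * ω s t ^ (1 / p) +
          ‖Λ‖ * (C * ω s t ^ (1 / p)) * ω s t ^ (2 / p) := by
        refine norm_sub_le_of_le ?_ ?_
        · rw [norm_neg]
          exact ContinuousLinearMap.le_of_opNorm_le_of_le _ hremainder hx
        · exact ContinuousLinearMap.le_of_opNorm_le_of_le _ (Λ.le_opNorm_of_le hderiv) hXX
    _ = (C + ‖Λ‖ * C) * ω s t ^ (3 / p) := by
        rw [hexp]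
        ring

lemma continuousOn_of_norm_sub_roughGerm_le (hω : IsControl T ω) (hp : 0 < p)
    (hX : IsTensorRoughPath T p ω τ x XX) (hy : IsControlledPath T p C ω x y y') {z : ℝ → V}
    {K : ℝ} (hz : ∀ ⦃s t : ℝ⦄, 0 ≤ s → s ≤ t → t ≤ T →
      ‖z t - z s - roughGerm Λ x XX y y' s t‖ ≤ K * ω s t ^ (3 / p)) :
    ContinuousOn z (Icc 0 T) := by
  obtain ⟨M, hM⟩ := hy.exists_norm_le hω hp hX.bound_x
  obtain ⟨M', hM'⟩ := hy.exists_norm_deriv_le hω hp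
  have hφ := (tendsto_const_mul_rpow_nhds_zero K (div_pos three_pos hp)).add
    ((tendsto_const_mul_rpow_nhds_zero M (one_div_pos.mpr hp)).add
      (tendsto_const_mul_rpow_nhds_zero (‖Λ‖ * M') (div_pos two_pos hp)))
  rw [add_zero, add_zero] at hφ
  refine hω.continuousOn_of_norm_sub_le hφ fun s t hs hst ht => ?_
  have hsT : s ∈ Icc 0 T := ⟨hs, hst.trans ht⟩
  have hgerm : ‖roughGerm Λ x XX y y' s t‖ ≤ M * ω s t ^ (1 / p) + ‖Λ‖ * M' * ω s t ^ (2 / p) :=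
    norm_add_le_of_le ((y s).le_of_opNorm_le_of_le (hM s hsT) (hX.bound_x hs hst ht))
      (ContinuousLinearMap.le_of_opNorm_le_of_le _ (Λ.le_opNorm_of_le (hM' s hsT))
        (hX.bound_XX hs hst ht))
  rw [← sub_add_cancel (z t - z s) (roughGerm Λ x XX y y' s t)]
  exact norm_add_le_of_le (hz hs hst ht) hgerm

theorem exists_rough_integral_general [CompleteSpace V] (hp : 0 < p) (hp3 : p < 3)
    (hω : IsControl T ω) (hX : IsTensorRoughPath T p ω τ x XX)
    (hΛ : ∀ B v w, Λ B (τ v w) = B v w) (hy : IsControlledPath T p C ω x y y') :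
    ∃ z : ℝ → V, ContinuousOn z (Icc 0 T) ∧ z 0 = 0 ∧
      ∃ K : ℝ, 0 ≤ K ∧ ∀ ⦃s t : ℝ⦄, 0 ≤ s → s ≤ t → t ≤ T →
        ‖z t - z s - y s (x t - x s) - Λ (y' s) (XX s t)‖ ≤ K * ω s t ^ (3 / p) := by
  have hθ : 1 < 3 / p := (one_lt_div hp).mpr hp3
  have hC : 0 ≤ |C| + ‖Λ‖ * |C| := by positivity
  obtain ⟨z, hz_zero, hz⟩ := (isAlmostAdditive_roughGerm hω hp (abs_nonneg C) hX hΛ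
    (hy.mono hω (le_abs_self C))).exists_sewing hω hθ hC
  refine ⟨z, continuousOn_of_norm_sub_roughGerm_le hω hp hX hy hz, hz_zero, _,
    sewingConst_nonneg hC hθ, fun s t hs hst ht => ?_⟩
  rw [sub_sub]
  exact hz hs hst ht

end RoughIntegral

section EuclideanTensor

variable {m n : ℕ} {V : Type*} [NormedAddCommGroup V] [NormedSpace ℝ V]

/-- The identification of `L(ℝ^n, L(ℝ^m, V))` with `L(ℝ^n ⊗ ℝ^m, V)` underlying `tapply`, as a
continuous linear map. -/
def tensorLift : (Euc n →L[ℝ] Euc m →L[ℝ] V) →L[ℝ] EuclideanSpace ℝ (Fin n × Fin m) →L[ℝ] V :=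
  ∑ q : Fin n × Fin m,
    ContinuousLinearMap.smulRightL ℝ (EuclideanSpace ℝ (Fin n × Fin m)) V
        (EuclideanSpace.proj q) ∘L
      ContinuousLinearMap.apply ℝ V (eb q.2) ∘L
      ContinuousLinearMap.apply ℝ (Euc m →L[ℝ] V) (eb q.1)

lemma tensorLift_apply (B : Euc n →L[ℝ] Euc m →L[ℝ] V) (X : EuclideanSpace ℝ (Fin n × Fin m)) :
    tensorLift B X = tapply (fun v w => B v w) X := by
  simp [tensorLift, tapply, _root_.sum_apply]

lemma sum_smul_eb (v : Euc n) : ∑ i, v i • eb i = v := by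
  simpa [eb] using (EuclideanSpace.basisFun (Fin n) ℝ).sum_repr v

lemma tensorLift_tensorE (B : Euc n →L[ℝ] Euc m →L[ℝ] V) (v : Euc n) (w : Euc m) :
    tensorLift B (tensorE v w) = B v w := by
  calc tensorLift B (tensorE v w) = ∑ i, ∑ j, (v i * w j) • B (eb i) (eb j) := by
        rw [tensorLift_apply, tapply, Fintype.sum_prod_type]
        rfl
    _ = B (∑ i, v i • eb i) (∑ j, w j • eb j) := by
        simp only [map_sum, map_smul, _root_.sum_apply, smul_apply, smul_sum, smul_smul,
          mul_comm]
        exact sum_comm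
    _ = B v w := by rw [sum_smul_eb, sum_smul_eb]

end EuclideanTensor

/-- **Existence of the rough integral of a controlled path against a rough path.**
If `(y, y')` is an `L(W,V)`-valued rough path controlled by `X = (x, XX)`, then there is a
continuous `z : [0,T] → V` with `z 0 = 0` such that
`z_t − z_s − y_s x_{s,t} − y'_s 𝕏_{s,t} = O(ω(s,t)^{3/p})`. -/
theorem exists_rough_integral
    {T p : ℝ} (hT : 0 < T) (hp1 : 1 ≤ p) (hp3 : p < 3) {k : ℕ} (hk : 1 ≤ k)
    {ω : ℝ → ℝ → ℝ} (hω : IsControl T ω)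
    {x : ℝ → Euc k} {XX : ℝ → ℝ → EuclideanSpace ℝ (Fin k × Fin k)}
    (hX : IsRoughPath T p ω x XX)
    {V : Type*} [NormedAddCommGroup V] [NormedSpace ℝ V] [CompleteSpace V]
    {y : ℝ → Euc k →L[ℝ] V} {y' : ℝ → Euc k →L[ℝ] Euc k →L[ℝ] V}
    (hy : IsCRP p ω x 0 T y y') :
    ∃ z : ℝ → V, ContinuousOn z (Set.Icc 0 T) ∧ z 0 = 0 ∧
      ∃ C : ℝ, 0 ≤ C ∧ ∀ ⦃s t : ℝ⦄, 0 ≤ s → s ≤ t → t ≤ T →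
        ‖z t - z s - y s (x t - x s) - tapply (fun v w => y' s v w) (XX s t)‖
          ≤ C * ω s t ^ (3 / p) := by
  obtain ⟨-, -, C, hC⟩ := hy
  simpa only [tensorLift_apply] using exists_rough_integral_general (by linarith) hp3 hω
    ⟨hX.chen, hX.bound_x, hX.bound_XX⟩ tensorLift_tensorE hC
end
end

section
/- For a parallelism on ℝ^d, U(n,m)⁻¹ agrees with U(m,n) to second order: Let D ⊆ ℝ^d × ℝ^d be an open set containing the diagonal {(x,x) : x ∈ ℝ^d}, and let U : D → End(ℝ^d) be smooth with U(x,x) = I for all x. Then for every x₀ ∈ ℝ^d there exist r > 0 and C < ∞ such that for all m, n in the open ball B_r(x₀): (m,n) and (n,m) lie in D, U(n,m) is invertible, and ‖U(n,m)⁻¹ − U(m,n)‖ ≤ C |n − m|². -/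
noncomputable section

open scoped BigOperators

/-! Write `W(m, n) = U(m, n) U(n, m)`. At a diagonal point, `DW (h, k) = DU (h, k) + DU (k, h)
= DU (h + k, h + k)`, which vanishes because `U` is constant on the diagonal. By Taylor's formula,
`W(n, m) = 1 + O(|n - m|²)`, and `U(n, m)⁻¹ - U(m, n) = U(n, m)⁻¹ (1 - W(n, m))`. -/

open Asymptotics Filter Topology

section Taylor

variable {E F : Type*} [NormedAddCommGroup E] [NormedSpace ℝ E]
  [NormedAddCommGroup F] [NormedSpace ℝ F]

theorem norm_sub_sub_fderiv_le_of_lipschitzOnWith {f : E → F} {s : Set E} {K : NNReal}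
    (hs : Convex ℝ s) (hf : ∀ x ∈ s, DifferentiableAt ℝ f x)
    (hK : LipschitzOnWith K (fderiv ℝ f) s) {x y : E} (hx : x ∈ s) (hy : y ∈ s) :
    ‖f y - f x - fderiv ℝ f x (y - x)‖ ≤ K * ‖y - x‖ ^ 2 := by
  have hsub : segment ℝ x y ⊆ s := hs.segment_subset hx hy
  have hbound : ∀ z ∈ segment ℝ x y, ‖fderiv ℝ f z - fderiv ℝ f x‖ ≤ K * ‖y - x‖ := by
    intro z hz
    have hzx : ‖z - x‖ ≤ ‖y - x‖ := norm_sub_le_of_mem_segment hz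
    exact (hK.norm_sub_le (hsub hz) hx).trans (by gcongr)
  calc ‖f y - f x - fderiv ℝ f x (y - x)‖
      ≤ K * ‖y - x‖ * ‖y - x‖ :=
        (convex_segment x y).norm_image_sub_le_of_norm_fderiv_le' (fun z hz ↦ hf z (hsub hz))
          hbound (left_mem_segment ℝ x y) (right_mem_segment ℝ x y)
    _ = K * ‖y - x‖ ^ 2 := by ring

theorem isBigO_sub_sub_fderiv_of_contDiffAt {f : E → F} {a : E} (hf : ContDiffAt ℝ 2 f a) :
    (fun p : E × E ↦ f p.1 - f p.2 - fderiv ℝ f p.2 (p.1 - p.2))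
      =O[𝓝 (a, a)] fun p ↦ ‖p.1 - p.2‖ ^ 2 := by
  obtain ⟨K, s, hs, hK⟩ :=
    (hf.fderiv_right (m := 1) (by norm_num)).exists_lipschitzOnWith
  have hdiff : ∀ᶠ x in 𝓝 a, DifferentiableAt ℝ f x :=
    (hf.eventually (by simp)).mono fun x hx ↦ hx.differentiableAt two_ne_zero
  obtain ⟨r, hr, hball⟩ :=
    Metric.eventually_nhds_iff_ball.1 ((eventually_mem_set.2 hs).and hdiff)
  have hKball : LipschitzOnWith K (fderiv ℝ f) (Metric.ball a r) :=
    hK.mono fun x hx ↦ (hball x hx).1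
  refine IsBigO.of_bound K ?_
  filter_upwards [prod_mem_nhds (Metric.ball_mem_nhds a hr) (Metric.ball_mem_nhds a hr)]
    with p ⟨hp₁, hp₂⟩
  simpa only [norm_pow, norm_norm] using norm_sub_sub_fderiv_le_of_lipschitzOnWith
    (convex_ball a r) (fun x hx ↦ (hball x hx).2) hKball hp₂ hp₁

theorem fderiv_diag_apply_eq_zero {f : E × E → F} {x : E} {c : F}
    (hf : DifferentiableAt ℝ f (x, x)) (hdiag : ∀ᶠ y in 𝓝 x, f (y, y) = c) (v : E) :
    fderiv ℝ f (x, x) (v, v) = 0 := by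
  have hcomp : HasFDerivAt (fun y ↦ f (y, y)) _ x :=
    HasFDerivAt.comp (g := f) x hf.hasFDerivAt ((hasFDerivAt_id x).prodMk (hasFDerivAt_id x))
  have hconst : HasFDerivAt (fun y ↦ f (y, y)) (0 : E →L[ℝ] F) x :=
    (hasFDerivAt_const c x).congr_of_eventuallyEq hdiag
  exact DFunLike.congr_fun (hcomp.unique hconst) v

theorem isBigO_sub_of_fderiv_diag_eq_zero {f : E × E → F} {x₀ : E} {c : F}
    (hf : ContDiffAt ℝ 2 f (x₀, x₀)) (hdiag : ∀ᶠ x in 𝓝 x₀, f (x, x) = c)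
    (hfderiv : ∀ᶠ x in 𝓝 x₀, fderiv ℝ f (x, x) = 0) :
    (fun p ↦ f p - c) =O[𝓝 (x₀, x₀)] fun p ↦ ‖p.1 - p.2‖ ^ 2 := by
  have hproj : Tendsto (fun p : E × E ↦ (p, (p.2, p.2))) (𝓝 (x₀, x₀))
      (𝓝 ((x₀, x₀), (x₀, x₀))) :=
    Continuous.tendsto (by fun_prop) (x₀, x₀)
  have hsnd : Tendsto Prod.snd (𝓝 (x₀, x₀)) (𝓝 x₀) := continuous_snd.tendsto (x₀, x₀)
  refine ((isBigO_sub_sub_fderiv_of_contDiffAt hf).comp_tendsto hproj).congr' ?_ ?_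
  · filter_upwards [hsnd.eventually hdiag, hsnd.eventually hfderiv] with p hp hp'
    simp [hp, hp']
  · exact .of_forall fun p ↦ by simp [Prod.norm_def]

end Taylor

theorem eventually_isUnit_of_continuousAt {X A : Type*} [TopologicalSpace X] [NormedRing A]
    [HasSummableGeomSeries A] {f : X → A} {x : X} (hf : ContinuousAt f x) (hx : IsUnit (f x)) :
    ∀ᶠ y in 𝓝 x, IsUnit (f y) :=
  hf.eventually (Units.isOpen.mem_nhds hx)

section Parallelism

variable {E A : Type*} [NormedAddCommGroup E] [NormedSpace ℝ E] [NormedRing A] [NormedAlgebra ℝ A]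

theorem fderiv_mul_swap_diag_eq_zero {U : E × E → A} {x : E}
    (hU : DifferentiableAt ℝ U (x, x)) (hUdiag : ∀ᶠ y in 𝓝 x, U (y, y) = 1) :
    fderiv ℝ (fun p ↦ U p * U p.swap) (x, x) = 0 := by
  have hswap : HasFDerivAt (fun p : E × E ↦ U p.swap) _ (x, x) :=
    HasFDerivAt.comp (x, x) hU.hasFDerivAt (ContinuousLinearEquiv.prodComm ℝ E E).hasFDerivAt
  refine (hU.hasFDerivAt.mul' hswap).fderiv.trans ?_
  refine ContinuousLinearMap.ext fun ⟨h, k⟩ ↦ ?_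
  have hsum : fderiv ℝ U (x, x) (k, h) + fderiv ℝ U (x, x) (h, k) = 0 := by
    rw [← map_add, Prod.mk_add_mk, add_comm h k]
    exact fderiv_diag_apply_eq_zero hU hUdiag (k + h)
  simpa [hUdiag.self_of_nhds] using hsum

theorem isBigO_mul_swap_sub_one {U : E × E → A} {x₀ : E}
    (hU : ContDiffAt ℝ 2 U (x₀, x₀)) (hUdiag : ∀ᶠ x in 𝓝 x₀, U (x, x) = 1) :
    (fun p ↦ U p * U p.swap - 1) =O[𝓝 (x₀, x₀)] fun p ↦ ‖p.1 - p.2‖ ^ 2 := by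
  have hswap : ContDiffAt ℝ 2 (fun p : E × E ↦ U p.swap) (x₀, x₀) :=
    ContDiffAt.comp (x₀, x₀) hU (contDiff_snd.prodMk contDiff_fst).contDiffAt
  have hdiff : ∀ᶠ x in 𝓝 x₀, DifferentiableAt ℝ U (x, x) :=
    (Continuous.tendsto (by fun_prop : Continuous fun x : E ↦ (x, x)) x₀).eventually
      ((hU.eventually (by simp)).mono fun p hp ↦ hp.differentiableAt two_ne_zero)
  refine isBigO_sub_of_fderiv_diag_eq_zero (hU.mul hswap) ?_ ?_
  · filter_upwards [hUdiag] with x hx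
    simp [hx]
  · filter_upwards [hdiff, hUdiag.eventually_nhds] with x hx hx'
    exact fderiv_mul_swap_diag_eq_zero hx hx'

theorem isBigO_inverse_sub_swap [HasSummableGeomSeries A] {U : E × E → A} {x₀ : E}
    (hU : ContDiffAt ℝ 2 U (x₀, x₀)) (hUdiag : ∀ᶠ x in 𝓝 x₀, U (x, x) = 1) :
    (fun p ↦ Ring.inverse (U p) - U p.swap) =O[𝓝 (x₀, x₀)] fun p ↦ ‖p.1 - p.2‖ ^ 2 := by
  have hU_one : U (x₀, x₀) = ((1 : Aˣ) : A) := hUdiag.self_of_nhds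
  have hunit : ∀ᶠ p in 𝓝 (x₀, x₀), IsUnit (U p) :=
    eventually_isUnit_of_continuousAt hU.continuousAt (hU_one ▸ Units.isUnit 1)
  have hinv : ContinuousAt (fun p ↦ Ring.inverse (U p)) (x₀, x₀) :=
    ContinuousAt.comp (g := Ring.inverse) (hU_one ▸ NormedRing.inverse_continuousAt 1)
      hU.continuousAt
  have hfactor : (fun p ↦ -Ring.inverse (U p) * (U p * U p.swap - 1))
      =ᶠ[𝓝 (x₀, x₀)] fun p ↦ Ring.inverse (U p) - U p.swap := by
    filter_upwards [hunit] with p hp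
    rw [neg_mul, mul_sub, Ring.inverse_mul_cancel_left _ _ hp, mul_one, neg_sub]
  exact ((hinv.tendsto.isBigO_one ℝ).neg_left.mul (isBigO_mul_swap_sub_one hU hUdiag)).congr'
    hfactor (.of_forall fun p ↦ one_mul _)

theorem parallelism_inverse_second_order_general [HasSummableGeomSeries A]
    {D : Set (E × E)} (hD : IsOpen D) (hdiag : ∀ x : E, (x, x) ∈ D)
    {U : E × E → A} (hU : ContDiffOn ℝ 2 U D) (hUdiag : ∀ x : E, U (x, x) = 1) :
    ∀ x₀ : E, ∃ r C : ℝ, 0 < r ∧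
      ∀ m ∈ Metric.ball x₀ r, ∀ n ∈ Metric.ball x₀ r,
        (m, n) ∈ D ∧ (n, m) ∈ D ∧ IsUnit (U (n, m)) ∧
        ‖Ring.inverse (U (n, m)) - U (m, n)‖ ≤ C * ‖n - m‖ ^ 2 := by
  intro x₀
  have hmem : D ∈ 𝓝 (x₀, x₀) := hD.mem_nhds (hdiag x₀)
  have hUx₀ : ContDiffAt ℝ 2 U (x₀, x₀) := hU.contDiffAt hmem
  have hunit : ∀ᶠ p in 𝓝 (x₀, x₀), IsUnit (U p) :=
    eventually_isUnit_of_continuousAt hUx₀.continuousAt (hUdiag x₀ ▸ isUnit_one)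
  obtain ⟨C, hC⟩ := (isBigO_inverse_sub_swap hUx₀ (.of_forall hUdiag)).bound
  obtain ⟨r, hr, hball⟩ :=
    Metric.eventually_nhds_iff_ball.1 ((eventually_mem_set.2 hmem).and (hunit.and hC))
  simp only [← ball_prod_same] at hball
  refine ⟨r, C, hr, fun m hm n hn ↦ ?_⟩
  obtain ⟨hnm, hnm_unit, hnm_bound⟩ := hball (n, m) ⟨hn, hm⟩
  exact ⟨(hball (m, n) ⟨hm, hn⟩).1, hnm, hnm_unit, by simpa using hnm_bound⟩

end Parallelism

/-- **A parallelism and its pointwise-swapped inverse agree to second order.**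
If `U` is a smooth `End(ℝ^d)`-valued map on an open neighborhood `D` of the diagonal with
`U(x,x) = I`, then locally `U(n,m)` is invertible and `‖U(n,m)⁻¹ − U(m,n)‖ = O(|n − m|²)`. -/
theorem parallelism_inverse_second_order
    {d : ℕ} {D : Set (Euc d × Euc d)} (hD : IsOpen D)
    (hdiag : ∀ x : Euc d, (x, x) ∈ D)
    {U : Euc d × Euc d → Euc d →L[ℝ] Euc d} (hU : ContDiffOn ℝ (⊤ : ℕ∞) U D)
    (hUdiag : ∀ x : Euc d, U (x, x) = ContinuousLinearMap.id ℝ (Euc d)) :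
    ∀ x₀ : Euc d, ∃ r C : ℝ, 0 < r ∧
      ∀ m ∈ Metric.ball x₀ r, ∀ n ∈ Metric.ball x₀ r,
        (m, n) ∈ D ∧ (n, m) ∈ D ∧ IsUnit (U (n, m)) ∧
        ‖Ring.inverse (U (n, m)) - U (m, n)‖ ≤ C * ‖n - m‖ ^ 2 :=
  parallelism_inverse_second_order_general hD hdiag (hU.of_le (WithTop.coe_le_coe.2 le_top)) hUdiag
end
end

section
/- Euclidean equivalence of the controlled-rough-path definition and the gauge definition: Let X = (x, 𝕏) be a weak-geometric p-rough path with control ω on [0,T], let (ψ, U) be a local gauge on ℝ^d with open domain D, let [a,b] ⊆ [0,T], let z : [a,b] → ℝ^d and z† : [a,b] → L(W, ℝ^d) be continuous, and let W₀ ⊆ ℝ^d be an open convex set with z([a,b]) ⊆ W₀ and W₀ × W₀ ⊆ D. Then the following are equivalent: (1) there exists C < ∞ with |z_t − z_s − z_s† x_{s,t}| ≤ C ω(s,t)^{2/p} and ‖z_t† − z_s†‖ ≤ C ω(s,t)^{1/p} for all a ≤ s ≤ t ≤ b; (2) there exists C < ∞ with |ψ(z_s, z_t) − z_s† x_{s,t}|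 ≤ C ω(s,t)^{2/p} and ‖U(z_s, z_t) ∘ z_t† − z_s†‖ ≤ C ω(s,t)^{1/p} for all a ≤ s ≤ t ≤ b. -/
noncomputable section

open scoped BigOperators

/-- The rough path `(x, XX)` is weak-geometric: the symmetric part of `XX s t` is
`(1/2) x_{s,t} ⊗ x_{s,t}`. -/
def IsWeakGeometric (T : ℝ) {k : ℕ} (x : ℝ → Euc k)
    (XX : ℝ → ℝ → EuclideanSpace ℝ (Fin k × Fin k)) : Prop :=
  ∀ ⦃s t : ℝ⦄, 0 ≤ s → s ≤ t → t ≤ T → ∀ i j : Fin k,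
    XX s t (i, j) + XX s t (j, i) = (x t - x s) i * (x t - x s) j
/-- `(ψ, U)` is a local gauge on `ℝ^d` with open domain `D`. -/
structure IsLocalGauge {d : ℕ} (D : Set (Euc d × Euc d))
    (ψ : Euc d × Euc d → Euc d) (U : Euc d × Euc d → Euc d →L[ℝ] Euc d) : Prop where
  open_dom : IsOpen D
  smooth_psi : ContDiffOn ℝ (⊤ : ℕ∞) ψ D
  smooth_U : ContDiffOn ℝ (⊤ : ℕ∞) U D
  diag_psi : ∀ x : Euc d, (x, x) ∈ D → ψ (x, x) = 0
  diag_dpsi : ∀ x : Euc d, (x, x) ∈ D →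
    fderiv ℝ (fun w => ψ (x, w)) x = ContinuousLinearMap.id ℝ (Euc d)
  diag_U : ∀ x : Euc d, (x, x) ∈ D → U (x, x) = ContinuousLinearMap.id ℝ (Euc d)

/-
Write `ρ = ω^{1/p}`. Taylor's formula on the compact set `z([a,b])²` gives
`ψ(x, y) = y - x + O(|y - x|²)` and `U(x, y) = I + O(|y - x|)`, so the two conditions differ by
`O(ρ²)` and `O(ρ)` as soon as `z_{s,t} = O(ρ)` and `z'` is bounded. Flat paths satisfy
`z_{s,t} = O(ρ)` on all of `[a,b]`. Under the gauge condition `ψ(z_s, z_t) = O(ρ)`, which controls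
`z_{s,t}` only near the diagonal; but local flat bounds add up to global ones, since the flat
remainder over `[s,t]` is the sum of those over `[s,u]` and `[u,t]` and the cross term
`(z'_u - z'_s) x_{u,t} = O(ρ²)`.
-/

section

open Set Filter Asymptotics
open scoped Topology

section Asymptotics

variable {X α F G : Type*} [TopologicalSpace X] [NormedAddCommGroup F] [NormedAddCommGroup G]

lemma exists_mem_isBigO_principal {l : Filter α} {f : α → F} {g : α → G}
    (h : f =O[l] g) : ∃ s ∈ l, f =O[𝓟 s] g := by
  obtain ⟨C, hC⟩ := h.bound
  exact ⟨_, hC, isBigO_principal.2 ⟨C, fun _ hq => hq⟩⟩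

lemma isBigO_principal_of_forall_nhdsWithin {K : Set X} (hK : IsCompact K) {f : X → F} {g : X → G}
    (h : ∀ q ∈ K, f =O[𝓝[K] q] g) : f =O[𝓟 K] g :=
  hK.induction_on (p := fun s => f =O[𝓟 s] g) (by simp)
    (fun _ _ hst ht => ht.mono (principal_mono.2 hst))
    (fun _ _ hs ht => by simpa only [sup_principal] using hs.sup ht)
    fun q hq => exists_mem_isBigO_principal (h q hq)

lemma isBigO_principal_of_nhdsWithin_zeros {K : Set X} (hK : IsCompact K) {f : X → F} {g : X → G}
    (hf : ContinuousOn f K) (hg : ContinuousOn g K)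
    (h : ∀ q ∈ K, g q = 0 → f =O[𝓝[K] q] g) : f =O[𝓟 K] g := by
  refine isBigO_principal_of_forall_nhdsWithin hK fun q hq => ?_
  by_cases hgq : g q = 0
  · exact h q hq hgq
  · have one_isBigO : (fun _ => (1 : ℝ)) =O[𝓝[K] q] g :=
      (isBigO_const_left_iff_pos_le_norm one_ne_zero).2
        ⟨‖g q‖ / 2, by positivity, (hg q hq).norm.eventually_const_le
          (half_lt_self (norm_pos_iff.2 hgq))⟩
    exact ((hf q hq).isBigO_one ℝ).trans one_isBigO

variable {m : Filter α}

lemma isBigO_of_sub_isBigO_norm_sq {w y : α → F} (hw : Tendsto w m (𝓝 0))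
    (h : (fun i => y i - w i) =O[m] fun i => ‖w i‖ ^ 2) : w =O[m] y := by
  have hsq : (fun i => ‖w i‖ ^ 2) =o[m] w := by
    simpa only [sq, one_mul, isLittleO_norm_right] using
      ((isLittleO_one_iff ℝ).2 (tendsto_zero_iff_norm_tendsto_zero.1 hw)).mul_isBigO
        (isBigO_refl (fun i => ‖w i‖) m)
  exact IsEquivalent.isBigO_symm (h.trans_isLittleO hsq)

variable [NormedSpace ℝ F] [NormedSpace ℝ G]

lemma isBigO_clm_apply {A : α → F →L[ℝ] G} {v : α → F} {f g : α → ℝ}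
    (hA : A =O[m] f) (hv : v =O[m] g) : (fun i => A i (v i)) =O[m] fun i => f i * g i :=
  (isBoundedBilinearMap_apply.isBigO_comp (g := A) (h := v)).trans (hA.norm_left.mul hv.norm_left)

lemma isBigO_of_sub_clm_apply {w : α → G} {A : α → F →L[ℝ] G} {v : α → F} {r : α → ℝ}
    (hw : (fun i => w i - A i (v i)) =O[m] fun i => r i ^ 2) (hr : r =O[m] fun _ => (1 : ℝ))
    (hA : A =O[m] fun _ => (1 : ℝ)) (hv : v =O[m] r) : w =O[m] r := by
  have hsq : (fun i => r i ^ 2) =O[m] r := by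
    simpa only [sq, mul_one] using (isBigO_refl r m).mul hr
  have hAv : (fun i => A i (v i)) =O[m] r := by simpa only [one_mul] using isBigO_clm_apply hA hv
  simpa only [sub_add_cancel] using (hw.trans hsq).add hAv

end Asymptotics

section Simplex

/-- The ordered pairs of times in `[a, b]`. -/
def simplex (a b : ℝ) : Set (ℝ × ℝ) := {q | a ≤ q.1 ∧ q.1 ≤ q.2 ∧ q.2 ≤ b}

lemma fst_mem_Icc_of_mem_simplex {a b : ℝ} {q : ℝ × ℝ} (hq : q ∈ simplex a b) : q.1 ∈ Icc a b :=
  ⟨hq.1, hq.2.1.trans hq.2.2⟩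

lemma snd_mem_Icc_of_mem_simplex {a b : ℝ} {q : ℝ × ℝ} (hq : q ∈ simplex a b) : q.2 ∈ Icc a b :=
  ⟨hq.1.trans hq.2.1, hq.2.2⟩

lemma tendsto_prodMk_simplex (a b : ℝ) : Tendsto (Prod.mk a) (𝓟 (Icc a b)) (𝓟 (simplex a b)) :=
  tendsto_principal_principal.2 fun _ ht => ⟨le_rfl, ht.1, ht.2⟩

lemma simplex_subset {a b s t : ℝ} (has : a ≤ s) (htb : t ≤ b) : simplex s t ⊆ simplex a b :=
  fun _ hq => ⟨has.trans hq.1, hq.2.1, hq.2.2.trans htb⟩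

lemma exists_nhds_simplex_subset {a b c : ℝ} {S : Set (ℝ × ℝ)} (hS : S ∈ 𝓝[simplex a b] (c, c)) :
    ∃ N ∈ 𝓝 c, ∀ ⦃s t⦄, a ≤ s → t ≤ b → s ∈ N → t ∈ N → simplex s t ⊆ S := by
  obtain ⟨M, hM, hMS⟩ := mem_nhdsWithin_iff_exists_mem_nhds_inter.1 hS
  obtain ⟨ε, hε, hball⟩ := Metric.mem_nhds_iff.1 hM
  refine ⟨Metric.ball c ε, Metric.ball_mem_nhds c hε, fun s t has htb hs ht q hq =>
    hMS ⟨hball ?_, simplex_subset has htb hq⟩⟩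
  have hsub : Icc s t ⊆ Metric.ball c ε := (convex_ball c ε).ordConnected.out hs ht
  rw [← ball_prod_same]
  exact ⟨hsub (fst_mem_Icc_of_mem_simplex hq), hsub (snd_mem_Icc_of_mem_simplex hq)⟩

lemma rel_of_trans_of_nhdsWithin_diag {a b : ℝ} (hab : a ≤ b) {P : ℝ → ℝ → Prop}
    (trans : ∀ ⦃s u t⦄, a ≤ s → s ≤ u → u ≤ t → t ≤ b → P s u → P u t → P s t)
    (loc : ∀ c ∈ Icc a b, ∃ S ∈ 𝓝[simplex a b] (c, c),
      ∀ ⦃s t⦄, a ≤ s → s ≤ t → t ≤ b → simplex s t ⊆ S → P s t) :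
    P a b := by
  choose! S hS hP using loc
  choose! N hN hNS using fun c hc => exists_nhds_simplex_subset (hS c hc)
  obtain ⟨τ, hτ_zero, hτ_mono, ⟨m, hm⟩, hcover⟩ := exists_monotone_Icc_subset_open_cover_Icc hab
    (c := fun c : Icc a b => (↑) ⁻¹' interior (N c))
    (fun _ => isOpen_interior.preimage continuous_subtype_val)
    (fun c _ => mem_iUnion.2 ⟨c, mem_interior_iff_mem_nhds.2 (hN c c.2)⟩)
  have step (n : ℕ) : P (τ n) (τ (n + 1)) := by
    obtain ⟨c, hc⟩ := hcover n
    have hle := hτ_mono n.le_succ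
    exact hP c c.2 (τ n).2.1 hle (τ (n + 1)).2.2 (hNS c c.2 (τ n).2.1 (τ (n + 1)).2.2
      (interior_subset (hc (left_mem_Icc.2 hle))) (interior_subset (hc (right_mem_Icc.2 hle))))
  have initial (n : ℕ) : P a (τ (n + 1)) := by
    induction n with
    | zero => simpa only [hτ_zero] using step 0
    | succ n ih =>
      exact trans le_rfl (τ (n + 1)).2.1 (hτ_mono (n + 1).le_succ) (τ (n + 2)).2.2 ih (step (n + 1))
  simpa only [hm (m + 1) m.le_succ] using initial m

lemma tendsto_increment_nhdsWithin_diag {E : Type*} [NormedAddCommGroup E] {a b c : ℝ} {z : ℝ → E}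
    (hz : ContinuousOn z (Icc a b)) (hc : c ∈ Icc a b) :
    Tendsto (fun q : ℝ × ℝ => z q.2 - z q.1) (𝓝[simplex a b] (c, c)) (𝓝 0) := by
  have hz₁ : ContinuousOn (fun q : ℝ × ℝ => z q.1) (simplex a b) :=
    hz.comp continuousOn_fst fun _ => fst_mem_Icc_of_mem_simplex
  have hz₂ : ContinuousOn (fun q : ℝ × ℝ => z q.2) (simplex a b) :=
    hz.comp continuousOn_snd fun _ => snd_mem_Icc_of_mem_simplex
  have hcc : (c, c) ∈ simplex a b := ⟨hc.1, le_rfl, hc.2⟩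
  simpa only [sub_self] using (hz₂ _ hcc).tendsto.sub (hz₁ _ hcc).tendsto

end Simplex

section Control

/-- Nonnegative interval functions on `[a, b]` that increase with the interval. Unlike
superadditivity, this property of a control `ω` passes to `ω ^ (1 / p)`. -/
structure IsIntervalMonotone (a b : ℝ) (ω : ℝ → ℝ → ℝ) : Prop where
  nonneg : ∀ ⦃s t⦄, a ≤ s → s ≤ t → t ≤ b → 0 ≤ ω s t
  mono : ∀ ⦃s u v t⦄, a ≤ s → s ≤ u → u ≤ v → v ≤ t → t ≤ b → ω u v ≤ ω s t

lemma IsControl.isIntervalMonotone {T a b : ℝ} {ω : ℝ → ℝ → ℝ} (hω : IsControl T ω)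
    (ha : 0 ≤ a) (hb : b ≤ T) : IsIntervalMonotone a b ω where
  nonneg _ _ has hst htb := hω.nonneg (ha.trans has) hst (htb.trans hb)
  mono s u v t has hsu huv hvt htb := by
    have hs := ha.trans has
    have hu := hs.trans hsu
    have ht := htb.trans hb
    linarith [hω.superadditive hs hsu (huv.trans hvt) ht, hω.superadditive hu huv hvt ht,
      hω.nonneg hs hsu (huv.trans (hvt.trans ht)), hω.nonneg (hu.trans huv) hvt ht]

namespace IsIntervalMonotone

variable {a b : ℝ} {ω : ℝ → ℝ → ℝ}

lemma subinterval (hω : IsIntervalMonotone a b ω) {s t : ℝ} (has : a ≤ s) (htb : t ≤ b) :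
    IsIntervalMonotone s t ω where
  nonneg _ _ h₁ h₂ h₃ := hω.nonneg (has.trans h₁) h₂ (h₃.trans htb)
  mono _ _ _ _ h₁ h₂ h₃ h₄ h₅ := hω.mono (has.trans h₁) h₂ h₃ h₄ (h₅.trans htb)

lemma rpow (hω : IsIntervalMonotone a b ω) {r : ℝ} (hr : 0 ≤ r) :
    IsIntervalMonotone a b fun s t => ω s t ^ r where
  nonneg _ _ has hst htb := Real.rpow_nonneg (hω.nonneg has hst htb) r
  mono _ _ _ _ has hsu huv hvt htb :=
    Real.rpow_le_rpow (hω.nonneg (has.trans hsu) huv (hvt.trans htb))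
      (hω.mono has hsu huv hvt htb) hr

lemma isBigO_one (hω : IsIntervalMonotone a b ω) :
    (fun q : ℝ × ℝ => ω q.1 q.2) =O[𝓟 (simplex a b)] fun _ => (1 : ℝ) :=
  isBigO_principal.2 ⟨ω a b, fun q ⟨haq, hq, hqb⟩ => by
    simpa [abs_of_nonneg (hω.nonneg haq hq hqb)] using hω.mono le_rfl haq hq hqb le_rfl⟩

lemma isBigO_left (hω : IsIntervalMonotone a b ω) (u : ℝ) :
    (fun q : ℝ × ℝ => ω q.1 u) =O[𝓟 (Icc a u ×ˢ Icc u b)] fun q => ω q.1 q.2 :=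
  isBigO_principal.2 ⟨1, fun q ⟨⟨haq, hqu⟩, huq, hqb⟩ => by
    rw [one_mul, Real.norm_of_nonneg (hω.nonneg haq hqu (huq.trans hqb))]
    exact (hω.mono haq le_rfl hqu huq hqb).trans (le_abs_self _)⟩

lemma isBigO_right (hω : IsIntervalMonotone a b ω) (u : ℝ) :
    (fun q : ℝ × ℝ => ω u q.2) =O[𝓟 (Icc a u ×ˢ Icc u b)] fun q => ω q.1 q.2 :=
  isBigO_principal.2 ⟨1, fun q ⟨⟨haq, hqu⟩, huq, hqb⟩ => by
    rw [one_mul, Real.norm_of_nonneg (hω.nonneg (haq.trans hqu) huq hqb)]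
    exact (hω.mono haq hqu huq le_rfl hqb).trans (le_abs_self _)⟩

lemma exists_bounds_iff_isBigO (hω : IsIntervalMonotone a b ω) {F G : Type*}
    [NormedAddCommGroup F] [NormedAddCommGroup G] {p : ℝ} {f : ℝ × ℝ → F} {g : ℝ × ℝ → G} :
    (∃ C : ℝ, ∀ ⦃s t : ℝ⦄, a ≤ s → s ≤ t → t ≤ b →
        ‖f (s, t)‖ ≤ C * ω s t ^ (2 / p) ∧ ‖g (s, t)‖ ≤ C * ω s t ^ (1 / p)) ↔
      f =O[𝓟 (simplex a b)] (fun q => (ω q.1 q.2 ^ (1 / p)) ^ 2) ∧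
        g =O[𝓟 (simplex a b)] fun q => ω q.1 q.2 ^ (1 / p) := by
  have hsq {s t : ℝ} (h : 0 ≤ ω s t) : (ω s t ^ (1 / p)) ^ 2 = ω s t ^ (2 / p) := by
    rw [← Real.rpow_mul_natCast h, Nat.cast_ofNat, one_div_mul_eq_div]
  simp only [isBigO_principal]
  constructor
  · rintro ⟨C, hC⟩
    refine ⟨⟨C, fun q ⟨haq, hq, hqb⟩ => ?_⟩, C, fun q ⟨haq, hq, hqb⟩ => ?_⟩
    all_goals have hωq := hω.nonneg haq hq hqb
    · rw [hsq hωq, Real.norm_of_nonneg (by positivity)]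
      exact (hC haq hq hqb).1
    · rw [Real.norm_of_nonneg (by positivity)]
      exact (hC haq hq hqb).2
  · rintro ⟨⟨C₁, h₁⟩, C₂, h₂⟩
    refine ⟨max C₁ C₂, fun s t has hst htb => ?_⟩
    have hωst := hω.nonneg has hst htb
    have hf := h₁ (s, t) ⟨has, hst, htb⟩
    have hg := h₂ (s, t) ⟨has, hst, htb⟩
    rw [hsq hωst, Real.norm_of_nonneg (by positivity)] at hf
    rw [Real.norm_of_nonneg (by positivity)] at hg
    exact ⟨hf.trans (by gcongr; exact le_max_left ..), hg.trans (by gcongr; exact le_max_right ..)⟩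

end IsIntervalMonotone

end Control

section Taylor

variable {E F : Type*} [NormedAddCommGroup E] [NormedSpace ℝ E]
  [NormedAddCommGroup F] [NormedSpace ℝ F]

lemma isBigO_sub_sub_fderiv {f : E → F} {x : E} (hf : ContDiffAt ℝ 2 f x) :
    (fun q : E × E => f q.2 - f q.1 - fderiv ℝ f q.1 (q.2 - q.1)) =O[𝓝 (x, x)]
      fun q => ‖q.2 - q.1‖ ^ 2 := by
  obtain ⟨K, s, hs, hlip⟩ := (hf.fderiv_right (m := 1) (by norm_num)).exists_lipschitzOnWith
  have hdiff : ∀ᶠ y in 𝓝 x, DifferentiableAt ℝ f y :=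
    (hf.eventually (by simp)).mono fun y hy => hy.differentiableAt two_ne_zero
  obtain ⟨ε, hε, hball⟩ := Metric.mem_nhds_iff.1 (inter_mem hs hdiff)
  refine IsBigO.of_bound K ?_
  filter_upwards [prod_mem_nhds (Metric.ball_mem_nhds x hε) (Metric.ball_mem_nhds x hε)]
  rintro ⟨y, w⟩ ⟨hy, hw⟩
  have hseg : segment ℝ y w ⊆ Metric.ball x ε := (convex_ball x ε).segment_subset hy hw
  have hderiv : ∀ v ∈ segment ℝ y w, ‖fderiv ℝ f v - fderiv ℝ f y‖ ≤ K * ‖w - y‖ := fun v hv =>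
    (hlip.norm_sub_le (hball (hseg hv)).1 (hball hy).1).trans
      (by gcongr; exact norm_sub_le_of_mem_segment hv)
  calc ‖f w - f y - fderiv ℝ f y (w - y)‖ ≤ K * ‖w - y‖ * ‖w - y‖ :=
        (convex_segment y w).norm_image_sub_le_of_norm_fderiv_le'
          (fun v hv => (hball (hseg hv)).2) hderiv
          (left_mem_segment ℝ y w) (right_mem_segment ℝ y w)
    _ = K * ‖‖w - y‖ ^ 2‖ := by rw [norm_pow, norm_norm]; ring

end Taylor

section Gauge

variable {E : Type*} [NormedAddCommGroup E] [NormedSpace ℝ E]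

/-- A local gauge `(ψ, U)` with open domain `D` on a real normed space, of class `C²` in `ψ` and
`C¹` in `U`, the classes for which Taylor's formula compares it with Euclidean increments. -/
structure IsGauge (D : Set (E × E)) (ψ : E × E → E) (U : E × E → E →L[ℝ] E) : Prop where
  isOpen : IsOpen D
  contDiffOn_psi : ContDiffOn ℝ 2 ψ D
  contDiffOn_U : ContDiffOn ℝ 1 U D
  psi_diag : ∀ x, (x, x) ∈ D → ψ (x, x) = 0
  fderiv_psi_diag : ∀ x, (x, x) ∈ D →
    fderiv ℝ (fun w => ψ (x, w)) x = ContinuousLinearMap.id ℝ E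
  U_diag : ∀ x, (x, x) ∈ D → U (x, x) = ContinuousLinearMap.id ℝ E

lemma IsLocalGauge.isGauge {d : ℕ} {D : Set (Euc d × Euc d)} {ψ : Euc d × Euc d → Euc d}
    {U : Euc d × Euc d → Euc d →L[ℝ] Euc d} (hG : IsLocalGauge D ψ U) : IsGauge D ψ U where
  isOpen := hG.open_dom
  contDiffOn_psi := hG.smooth_psi.of_le (by norm_cast)
  contDiffOn_U := hG.smooth_U.of_le (by norm_cast)
  psi_diag := hG.diag_psi
  fderiv_psi_diag := hG.diag_dpsi
  U_diag := hG.diag_U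

namespace IsGauge

variable {D : Set (E × E)} {ψ : E × E → E} {U : E × E → E →L[ℝ] E} {x : E} {S : Set E}

lemma eventually_diag_mem (hG : IsGauge D ψ U) (hx : (x, x) ∈ D) :
    ∀ᶠ q : E × E in 𝓝 (x, x), (q.1, q.1) ∈ D :=
  (Continuous.tendsto (by fun_prop) (x, x)).eventually (hG.isOpen.mem_nhds hx)

lemma fderiv_psi_apply_inr (hG : IsGauge D ψ U) (hx : (x, x) ∈ D) (v : E) :
    fderiv ℝ ψ (x, x) (0, v) = v := by
  have hψ : DifferentiableAt ℝ ψ (x, x) :=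
    (hG.contDiffOn_psi.contDiffAt (hG.isOpen.mem_nhds hx)).differentiableAt two_ne_zero
  have hpartial := (hψ.hasFDerivAt.comp x (hasFDerivAt_prodMk_right x x)).fderiv
  rw [show ψ ∘ (fun w => (x, w)) = fun w => ψ (x, w) from rfl, hG.fderiv_psi_diag x hx]
    at hpartial
  simpa using (DFunLike.congr_fun hpartial v).symm

lemma psi_sub_isBigO_nhds (hG : IsGauge D ψ U) (hx : (x, x) ∈ D) :
    (fun q : E × E => ψ q - (q.2 - q.1)) =O[𝓝 (x, x)] fun q => ‖q.2 - q.1‖ ^ 2 := by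
  have hdiag : Tendsto (fun q : E × E => ((q.1, q.1), q)) (𝓝 (x, x)) (𝓝 ((x, x), (x, x))) :=
    Continuous.tendsto (by fun_prop) (x, x)
  refine ((isBigO_sub_sub_fderiv (hG.contDiffOn_psi.contDiffAt
    (hG.isOpen.mem_nhds hx))).comp_tendsto hdiag).congr' ?_ (.of_forall fun q => ?_)
  · filter_upwards [hG.eventually_diag_mem hx] with q hq
    have hq_sub : q - (q.1, q.1) = (0, q.2 - q.1) := by ext <;> simp
    simp only [Function.comp_apply, hq_sub, hG.psi_diag q.1 hq, hG.fderiv_psi_apply_inr hq,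
      sub_zero]
  · simp [Prod.norm_def]

lemma U_sub_id_isBigO_nhds (hG : IsGauge D ψ U) (hx : (x, x) ∈ D) :
    (fun q : E × E => U q - ContinuousLinearMap.id ℝ E) =O[𝓝 (x, x)] fun q => q.2 - q.1 := by
  have hdiag : Tendsto (fun q : E × E => (q, (q.1, q.1))) (𝓝 (x, x)) (𝓝 ((x, x), (x, x))) :=
    Continuous.tendsto (by fun_prop) (x, x)
  have hU := (hG.contDiffOn_U.contDiffAt (hG.isOpen.mem_nhds hx)).hasStrictFDerivAt one_ne_zero
  refine IsBigO.congr' (hU.isBigO_sub.comp_tendsto hdiag).norm_right ?_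
    (.of_forall fun q => ?_) |>.of_norm_right
  · filter_upwards [hG.eventually_diag_mem hx] with q hq
    simp [hG.U_diag q.1 hq]
  · simp [Prod.norm_def]

lemma psi_sub_isBigO (hG : IsGauge D ψ U) (hS : IsCompact S) (hSD : S ×ˢ S ⊆ D) :
    (fun q : E × E => ψ q - (q.2 - q.1)) =O[𝓟 (S ×ˢ S)] fun q => ‖q.2 - q.1‖ ^ 2 := by
  refine isBigO_principal_of_nhdsWithin_zeros (hS.prod hS)
    ((hG.contDiffOn_psi.continuousOn.mono hSD).sub (by fun_prop)) (by fun_prop) ?_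
  rintro ⟨x, y⟩ hxy hzero
  obtain rfl : y = x := by simpa [sub_eq_zero] using hzero
  exact (hG.psi_sub_isBigO_nhds (hSD hxy)).mono nhdsWithin_le_nhds

lemma U_sub_id_isBigO (hG : IsGauge D ψ U) (hS : IsCompact S) (hSD : S ×ˢ S ⊆ D) :
    (fun q : E × E => U q - ContinuousLinearMap.id ℝ E) =O[𝓟 (S ×ˢ S)] fun q => q.2 - q.1 := by
  refine isBigO_principal_of_nhdsWithin_zeros (hS.prod hS)
    ((hG.contDiffOn_U.continuousOn.mono hSD).sub continuousOn_const) (by fun_prop) ?_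
  rintro ⟨x, y⟩ hxy hzero
  obtain rfl : y = x := sub_eq_zero.1 hzero
  exact (hG.U_sub_id_isBigO_nhds (hSD hxy)).mono nhdsWithin_le_nhds

end IsGauge

end Gauge

section ControlledPath

variable {V E : Type*} [NormedAddCommGroup V] [NormedSpace ℝ V]
  [NormedAddCommGroup E] [NormedSpace ℝ E]

/-- `(z, z')` is controlled by `x` along the filter `l` of pairs of times, with errors measured by
Euclidean increments; `ρ s t` plays the role of `ω(s,t)^{1/p}`. Taking `l = 𝓟 (simplex a b)` gives
the uniform bounds on `[a, b]`, smaller filters give local versions. -/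
def IsFlatCRP (l : Filter (ℝ × ℝ)) (ρ : ℝ → ℝ → ℝ) (x : ℝ → V) (z : ℝ → E)
    (z' : ℝ → V →L[ℝ] E) : Prop :=
  (fun q => z q.2 - z q.1 - z' q.1 (x q.2 - x q.1)) =O[l] (fun q => ρ q.1 q.2 ^ 2) ∧
    (fun q => z' q.2 - z' q.1) =O[l] fun q => ρ q.1 q.2

/-- The analogue of `IsFlatCRP` in which increments are measured by a gauge `(ψ, U)`. -/
def IsGaugeCRP (l : Filter (ℝ × ℝ)) (ρ : ℝ → ℝ → ℝ) (ψ : E × E → E) (U : E × E → E →L[ℝ] E)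
    (x : ℝ → V) (z : ℝ → E) (z' : ℝ → V →L[ℝ] E) : Prop :=
  (fun q => ψ (z q.1, z q.2) - z' q.1 (x q.2 - x q.1)) =O[l] (fun q => ρ q.1 q.2 ^ 2) ∧
    (fun q => (U (z q.1, z q.2)).comp (z' q.2) - z' q.1) =O[l] fun q => ρ q.1 q.2

variable {l : Filter (ℝ × ℝ)} {a b : ℝ} {ρ : ℝ → ℝ → ℝ} {x : ℝ → V}
  {z : ℝ → E} {z' : ℝ → V →L[ℝ] E} {ψ : E × E → E} {U : E × E → E →L[ℝ] E} {D : Set (E × E)}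

lemma isFlatCRP_iff_isGaugeCRP_of_isBigO
    (hψ : (fun q => ψ (z q.1, z q.2) - (z q.2 - z q.1)) =O[l] fun q => ‖z q.2 - z q.1‖ ^ 2)
    (hU : (fun q => U (z q.1, z q.2) - ContinuousLinearMap.id ℝ E) =O[l] fun q => z q.2 - z q.1)
    (hz : (fun q => z q.2 - z q.1) =O[l] fun q => ρ q.1 q.2)
    (hz' : (fun q => z' q.2) =O[l] fun _ => (1 : ℝ)) :
    IsFlatCRP l ρ x z z' ↔ IsGaugeCRP l ρ ψ U x z z' := by
  have hψρ := hψ.trans (hz.norm_left.pow 2)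
  have hUρ : (fun q => (U (z q.1, z q.2) - ContinuousLinearMap.id ℝ E).comp (z' q.2)) =O[l]
      fun q => ρ q.1 q.2 := by
    simpa only [mul_one] using (isBoundedBilinearMap_comp.isBigO_comp
      (g := fun q : ℝ × ℝ => U (z q.1, z q.2) - ContinuousLinearMap.id ℝ E)
      (h := fun q => z' q.2)).trans ((hU.trans hz).norm_left.mul hz'.norm_left)
  refine (and_congr (IsBigO.congr_of_sub (hψρ.congr_left fun q => ?_))
    (IsBigO.congr_of_sub (hUρ.congr_left fun q => ?_))).symm
  · rw [sub_sub_sub_cancel_right]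
  · rw [sub_sub_sub_cancel_right, ContinuousLinearMap.sub_comp, ContinuousLinearMap.id_comp]

namespace IsFlatCRP

lemma mono {l' : Filter (ℝ × ℝ)} (h : IsFlatCRP l ρ x z z') (hl : l' ≤ l) :
    IsFlatCRP l' ρ x z z' :=
  ⟨h.1.mono hl, h.2.mono hl⟩

lemma sup {l' : Filter (ℝ × ℝ)} (h : IsFlatCRP l ρ x z z') (h' : IsFlatCRP l' ρ x z z') :
    IsFlatCRP (l ⊔ l') ρ x z z' :=
  ⟨h.1.sup h'.1, h.2.sup h'.2⟩

lemma exists_mem_principal (h : IsFlatCRP l ρ x z z') :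
    ∃ S ∈ l, IsFlatCRP (𝓟 S) ρ x z z' := by
  obtain ⟨S₁, hS₁, h₁⟩ := exists_mem_isBigO_principal h.1
  obtain ⟨S₂, hS₂, h₂⟩ := exists_mem_isBigO_principal h.2
  exact ⟨S₁ ∩ S₂, inter_mem hS₁ hS₂, h₁.mono (by simp), h₂.mono (by simp)⟩

lemma straddling {u : ℝ} (hρ : IsIntervalMonotone a b ρ)
    (hx : (fun q : ℝ × ℝ => x q.2 - x q.1) =O[𝓟 (simplex u b)] fun q => ρ q.1 q.2)
    (hau : IsFlatCRP (𝓟 (simplex a u)) ρ x z z') (hub : IsFlatCRP (𝓟 (simplex u b)) ρ x z z') :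
    IsFlatCRP (𝓟 (Icc a u ×ˢ Icc u b)) ρ x z z' := by
  have left : Tendsto (fun q : ℝ × ℝ => (q.1, u)) (𝓟 (Icc a u ×ˢ Icc u b)) (𝓟 (simplex a u)) :=
    tendsto_principal_principal.2 fun q hq => ⟨hq.1.1, hq.1.2, le_rfl⟩
  have right : Tendsto (fun q : ℝ × ℝ => (u, q.2)) (𝓟 (Icc a u ×ˢ Icc u b)) (𝓟 (simplex u b)) :=
    tendsto_principal_principal.2 fun q hq => ⟨le_rfl, hq.2.1, hq.2.2⟩
  have rem_left := (hau.1.comp_tendsto left).trans ((hρ.isBigO_left u).pow 2)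
  have rem_right := (hub.1.comp_tendsto right).trans ((hρ.isBigO_right u).pow 2)
  have deriv_left := (hau.2.comp_tendsto left).trans (hρ.isBigO_left u)
  have deriv_right := (hub.2.comp_tendsto right).trans (hρ.isBigO_right u)
  have cross := isBigO_clm_apply deriv_left ((hx.comp_tendsto right).trans (hρ.isBigO_right u))
  simp only [← sq] at cross
  refine ⟨((rem_left.add rem_right).add cross).congr_left fun q => ?_,
    (deriv_left.add deriv_right).congr_left fun q => ?_⟩
  · simp only [Function.comp_apply, map_sub, sub_apply]
    abel
  · simp only [Function.comp_apply]
    abel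

lemma glue {u : ℝ} (hρ : IsIntervalMonotone a b ρ)
    (hx : (fun q : ℝ × ℝ => x q.2 - x q.1) =O[𝓟 (simplex u b)] fun q => ρ q.1 q.2)
    (hau : IsFlatCRP (𝓟 (simplex a u)) ρ x z z') (hub : IsFlatCRP (𝓟 (simplex u b)) ρ x z z') :
    IsFlatCRP (𝓟 (simplex a b)) ρ x z z' := by
  refine ((hau.sup hub).sup (straddling hρ hx hau hub)).mono ?_
  simp only [sup_principal, le_principal_iff, mem_principal]
  rintro q ⟨haq, hq, hqb⟩
  rcases le_total q.2 u with hq₂ | hq₂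
  · exact .inl (.inl ⟨haq, hq, hq₂⟩)
  · rcases le_total q.1 u with hq₁ | hq₁
    · exact .inr ⟨⟨haq, hq₁⟩, hq₂, hqb⟩
    · exact .inl (.inr ⟨hq₁, hq, hqb⟩)

lemma of_nhdsWithin_diag (hab : a ≤ b) (hρ : IsIntervalMonotone a b ρ)
    (hx : (fun q : ℝ × ℝ => x q.2 - x q.1) =O[𝓟 (simplex a b)] fun q => ρ q.1 q.2)
    (h : ∀ c ∈ Icc a b, IsFlatCRP (𝓝[simplex a b] (c, c)) ρ x z z') :
    IsFlatCRP (𝓟 (simplex a b)) ρ x z z' := by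
  refine rel_of_trans_of_nhdsWithin_diag hab
    (P := fun s t => IsFlatCRP (𝓟 (simplex s t)) ρ x z z') ?_ fun c hc => ?_
  · intro s u t has hsu _ htb hsu_flat hut_flat
    exact glue (hρ.subinterval has htb)
      (hx.mono (principal_mono.2 (simplex_subset (has.trans hsu) htb))) hsu_flat hut_flat
  · obtain ⟨S, hS, hflat⟩ := (h c hc).exists_mem_principal
    exact ⟨S, hS, fun s t _ _ _ hsub => hflat.mono (principal_mono.2 hsub)⟩

lemma deriv_isBigO_one (hρ : IsIntervalMonotone a b ρ)
    (h : IsFlatCRP (𝓟 (simplex a b)) ρ x z z') : z' =O[𝓟 (Icc a b)] fun _ => (1 : ℝ) := by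
  have hdiff := (h.2.trans hρ.isBigO_one).comp_tendsto (tendsto_prodMk_simplex a b)
  simpa [Function.comp_def] using hdiff.add (isBigO_const_const (z' a) one_ne_zero _)

end IsFlatCRP

lemma norm_le_two_mul_norm_comp {A : E →L[ℝ] E} (hA : ‖A - ContinuousLinearMap.id ℝ E‖ ≤ 1 / 2)
    (B : V →L[ℝ] E) : ‖B‖ ≤ 2 * ‖A.comp B‖ := by
  have hdiff : ‖A.comp B - B‖ ≤ 1 / 2 * ‖B‖ :=
    calc ‖A.comp B - B‖ = ‖(A - ContinuousLinearMap.id ℝ E).comp B‖ := by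
          rw [ContinuousLinearMap.sub_comp, ContinuousLinearMap.id_comp]
      _ ≤ ‖A - ContinuousLinearMap.id ℝ E‖ * ‖B‖ := ContinuousLinearMap.opNorm_comp_le _ _
      _ ≤ 1 / 2 * ‖B‖ := by gcongr
  linarith [norm_le_norm_add_norm_sub (A.comp B) B]

-- Near the diagonal `U(z_s, z_t)` is close to the identity, so `z'_s` controls `z'_t`.
lemma IsGaugeCRP.deriv_isBigO_one (hab : a ≤ b) (hρ : IsIntervalMonotone a b ρ)
    (hz : ContinuousOn z (Icc a b))
    (hU : (fun q => U (z q.1, z q.2) - ContinuousLinearMap.id ℝ E) =O[𝓟 (simplex a b)]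
      fun q => z q.2 - z q.1)
    (h : IsGaugeCRP (𝓟 (simplex a b)) ρ ψ U x z z') :
    z' =O[𝓟 (Icc a b)] fun _ => (1 : ℝ) := by
  refine rel_of_trans_of_nhdsWithin_diag hab
    (P := fun s t => z' =O[𝓟 (Icc s t)] fun _ => (1 : ℝ)) ?_ fun c hc => ?_
  · intro s u t _ hsu hut _ hsu_bdd hut_bdd
    simpa only [sup_principal, Icc_union_Icc_eq_Icc hsu hut] using hsu_bdd.sup hut_bdd
  · have hU_zero := (hU.mono inf_le_right).trans_tendsto (tendsto_increment_nhdsWithin_diag hz hc)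
    refine ⟨{q | ‖U (z q.1, z q.2) - ContinuousLinearMap.id ℝ E‖ ≤ 1 / 2},
      (tendsto_zero_iff_norm_tendsto_zero.1 hU_zero).eventually_le_const one_half_pos,
      fun s t has _ htb hsub => ?_⟩
    have hst_simplex : Tendsto (Prod.mk s) (𝓟 (Icc s t)) (𝓟 (simplex a b)) :=
      (tendsto_prodMk_simplex s t).mono_right (principal_mono.2 (simplex_subset has htb))
    have hcomp : (fun r => (U (z s, z r)).comp (z' r)) =O[𝓟 (Icc s t)] fun _ => (1 : ℝ) := by
      simpa [Function.comp_def] using ((h.2.trans hρ.isBigO_one).comp_tendsto hst_simplex).add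
        (isBigO_const_const (z' s) one_ne_zero _)
    have hU_half : ∀ r ∈ Icc s t, ‖U (z s, z r) - ContinuousLinearMap.id ℝ E‖ ≤ 1 / 2 :=
      fun r hr => @hsub (s, r) ⟨le_rfl, hr.1, hr.2⟩
    exact (isBigO_principal.2 ⟨2, fun r hr =>
      norm_le_two_mul_norm_comp (hU_half r hr) (z' r)⟩).trans hcomp

lemma isFlatCRP_iff_isGaugeCRP (hab : a ≤ b) (hρ : IsIntervalMonotone a b ρ)
    (hx : (fun q : ℝ × ℝ => x q.2 - x q.1) =O[𝓟 (simplex a b)] fun q => ρ q.1 q.2)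
    (hG : IsGauge D ψ U) (hz : ContinuousOn z (Icc a b))
    (hzD : ∀ s ∈ Icc a b, ∀ t ∈ Icc a b, (z s, z t) ∈ D) :
    IsFlatCRP (𝓟 (simplex a b)) ρ x z z' ↔ IsGaugeCRP (𝓟 (simplex a b)) ρ ψ U x z z' := by
  have fst : Tendsto Prod.fst (𝓟 (simplex a b)) (𝓟 (Icc a b)) :=
    tendsto_principal_principal.2 fun _ => fst_mem_Icc_of_mem_simplex
  have snd : Tendsto Prod.snd (𝓟 (simplex a b)) (𝓟 (Icc a b)) :=
    tendsto_principal_principal.2 fun _ => snd_mem_Icc_of_mem_simplex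
  have hS : IsCompact (z '' Icc a b) := isCompact_Icc.image_of_continuousOn hz
  have hSD : (z '' Icc a b) ×ˢ (z '' Icc a b) ⊆ D := by
    rintro ⟨_, _⟩ ⟨⟨s, hs, rfl⟩, t, ht, rfl⟩
    exact hzD s hs t ht
  have pair : Tendsto (fun q : ℝ × ℝ => (z q.1, z q.2)) (𝓟 (simplex a b))
      (𝓟 ((z '' Icc a b) ×ˢ (z '' Icc a b))) :=
    tendsto_principal_principal.2 fun q hq =>
      ⟨mem_image_of_mem z (fst_mem_Icc_of_mem_simplex hq),
        mem_image_of_mem z (snd_mem_Icc_of_mem_simplex hq)⟩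
  have hψ := (hG.psi_sub_isBigO hS hSD).comp_tendsto pair
  have hU := (hG.U_sub_id_isBigO hS hSD).comp_tendsto pair
  constructor
  · intro h
    have hz' := h.deriv_isBigO_one hρ
    have hzρ := isBigO_of_sub_clm_apply h.1 hρ.isBigO_one (hz'.comp_tendsto fst) hx
    exact (isFlatCRP_iff_isGaugeCRP_of_isBigO hψ hU hzρ (hz'.comp_tendsto snd)).1 h
  · intro h
    have hz' := h.deriv_isBigO_one hab hρ hz hU
    have hψρ := isBigO_of_sub_clm_apply h.1 hρ.isBigO_one (hz'.comp_tendsto fst) hx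
    refine .of_nhdsWithin_diag hab hρ hx fun c hc => ?_
    have hl : 𝓝[simplex a b] (c, c) ≤ 𝓟 (simplex a b) := inf_le_right
    have hzψ := isBigO_of_sub_isBigO_norm_sq (tendsto_increment_nhdsWithin_diag hz hc) (hψ.mono hl)
    exact (isFlatCRP_iff_isGaugeCRP_of_isBigO (hψ.mono hl) (hU.mono hl)
      (hzψ.trans (hψρ.mono hl)) ((hz'.comp_tendsto snd).mono hl)).2 ⟨h.1.mono hl, h.2.mono hl⟩

theorem flatCRP_iff_gaugeCRP_general {p : ℝ} (hp : 0 < p) (hab : a ≤ b) {ω : ℝ → ℝ → ℝ}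
    (hω : IsIntervalMonotone a b ω)
    (hx : ∀ ⦃s t : ℝ⦄, a ≤ s → s ≤ t → t ≤ b → ‖x t - x s‖ ≤ ω s t ^ (1 / p))
    (hG : IsGauge D ψ U) (hz : ContinuousOn z (Icc a b))
    (hzD : ∀ s ∈ Icc a b, ∀ t ∈ Icc a b, (z s, z t) ∈ D) :
    (∃ C : ℝ, ∀ ⦃s t : ℝ⦄, a ≤ s → s ≤ t → t ≤ b →
        ‖z t - z s - z' s (x t - x s)‖ ≤ C * ω s t ^ (2 / p) ∧
        ‖z' t - z' s‖ ≤ C * ω s t ^ (1 / p)) ↔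
    (∃ C : ℝ, ∀ ⦃s t : ℝ⦄, a ≤ s → s ≤ t → t ≤ b →
        ‖ψ (z s, z t) - z' s (x t - x s)‖ ≤ C * ω s t ^ (2 / p) ∧
        ‖(U (z s, z t)).comp (z' t) - z' s‖ ≤ C * ω s t ^ (1 / p)) := by
  have hxρ : (fun q : ℝ × ℝ => x q.2 - x q.1) =O[𝓟 (simplex a b)]
      fun q => ω q.1 q.2 ^ (1 / p) :=
    isBigO_principal.2 ⟨1, fun q hq => by
      simpa only [one_mul] using (hx hq.1 hq.2.1 hq.2.2).trans (Real.le_norm_self _)⟩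
  exact hω.exists_bounds_iff_isBigO.trans
    ((isFlatCRP_iff_isGaugeCRP hab (hω.rpow (by positivity)) hxρ hG hz hzD).trans
      hω.exists_bounds_iff_isBigO.symm)

end ControlledPath

end

/-- **Euclidean equivalence of the flat controlled-rough-path definition and the gauge
definition** (Theorem 2.47 of Driver–Semko). -/
theorem flatCRP_iff_gaugeCRP
    {T p : ℝ} (hT : 0 < T) (hp1 : 1 ≤ p) (hp3 : p < 3) {k : ℕ} (hk : 1 ≤ k)
    {ω : ℝ → ℝ → ℝ} (hω : IsControl T ω)
    {x : ℝ → Euc k} {XX : ℝ → ℝ → EuclideanSpace ℝ (Fin k × Fin k)}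
    (hX : IsRoughPath T p ω x XX) (hgeo : IsWeakGeometric T x XX)
    {d : ℕ} {D : Set (Euc d × Euc d)}
    {ψ : Euc d × Euc d → Euc d} {U : Euc d × Euc d → Euc d →L[ℝ] Euc d}
    (hG : IsLocalGauge D ψ U)
    {a b : ℝ} (ha : 0 ≤ a) (hab : a ≤ b) (hbT : b ≤ T)
    {z : ℝ → Euc d} {z' : ℝ → Euc k →L[ℝ] Euc d}
    (hz : ContinuousOn z (Set.Icc a b)) (hz' : ContinuousOn z' (Set.Icc a b))
    {W₀ : Set (Euc d)} (hW₀open : IsOpen W₀) (hW₀conv : Convex ℝ W₀)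
    (hzW : ∀ s ∈ Set.Icc a b, z s ∈ W₀) (hWD : W₀ ×ˢ W₀ ⊆ D) :
    (∃ C : ℝ, ∀ ⦃s t : ℝ⦄, a ≤ s → s ≤ t → t ≤ b →
        ‖z t - z s - z' s (x t - x s)‖ ≤ C * ω s t ^ (2 / p) ∧
        ‖z' t - z' s‖ ≤ C * ω s t ^ (1 / p)) ↔
    (∃ C : ℝ, ∀ ⦃s t : ℝ⦄, a ≤ s → s ≤ t → t ≤ b →
        ‖ψ (z s, z t) - z' s (x t - x s)‖ ≤ C * ω s t ^ (2 / p) ∧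
        ‖(U (z s, z t)).comp (z' t) - z' s‖ ≤ C * ω s t ^ (1 / p)) := by
  exact flatCRP_iff_gaugeCRP_general (by linarith : 0 < p) hab (hω.isIntervalMonotone ha hbT)
    (fun _ _ has hst htb => hX.bound_x (ha.trans has) hst (htb.trans hbT)) hG.isGauge hz
    fun s hs t ht => hWD ⟨hzW s hs, hzW t ht⟩
end
end

section
/- Patching lemma for estimates over an interlaced cover: Let ω be a control on [S,T] and {a_i, b_i}_{i=0}^{l} an interlaced cover of [S,T] with ω(a_{i+1}, b_i) > 0 for all 0 ≤ i < l. Let θ > 0 and let F : D → [0,∞) be a bounded function on some D ⊆ Δ_{[S,T]} := {(s,t) : S ≤ s ≤ t ≤ T}, such that for each 0 ≤ i ≤ l there exists C_i < ∞ with F(s,t) ≤ C_i ω(s,t)^θ for all (s,t) ∈ D with a_i ≤ s ≤ t ≤ b_i. Then there exists C̃ < ∞ such that F(s,t) ≤ C̃ ω(s,t)^θ for all (s,t) ∈ D. -/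
/-- `ω` is a control on the simplex `{(s,t) : S ≤ s ≤ t ≤ T}`. -/
structure IsControlOn (S T : ℝ) (ω : ℝ → ℝ → ℝ) : Prop where
  cont : ContinuousOn (fun q : ℝ × ℝ => ω q.1 q.2)
    {q : ℝ × ℝ | S ≤ q.1 ∧ q.1 ≤ q.2 ∧ q.2 ≤ T}
  nonneg : ∀ ⦃s t : ℝ⦄, S ≤ s → s ≤ t → t ≤ T → 0 ≤ ω s t
  zero : ∀ ⦃s : ℝ⦄, S ≤ s → s ≤ T → ω s s = 0
  superadditive : ∀ ⦃s t u : ℝ⦄, S ≤ s → s ≤ t → t ≤ u → u ≤ T → ω s t + ω t u ≤ ω s u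

/-! A pair `(s, t) ∈ D` that lies in no single piece `[aᵢ, bᵢ]` satisfies `s < aᵢ₊₁` and `bᵢ < t`
for some `i`. Such a pair straddles the overlap `[aᵢ₊₁, bᵢ]`, so monotonicity of `ω` under inclusion
bounds `ω(s, t)` below by `ω(aᵢ₊₁, bᵢ) > 0`, and there boundedness of `F` is already enough. -/

/-- `f` is bounded above on `s` by a constant multiple of `g`. This is the one-sided analogue of
`f =O[𝓟 s] g`: a lower bound on `f` is not part of the notion. -/
def IsDominatedOn {X 𝕜 : Type*} [Mul 𝕜] [LE 𝕜] (s : Set X) (f g : X → 𝕜) : Prop :=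
  ∃ C, ∀ x ∈ s, f x ≤ C * g x

/-- `ρ` is monotone, with respect to inclusion, as a function of the endpoints of subintervals of
`[S, T]`. Unlike superadditivity, this property passes from `ω` to `ω ^ θ`. -/
def IntervalMonotoneOn {α β : Type*} [Preorder α] [Preorder β] (S T : α) (ρ : α → α → β) : Prop :=
  ∀ ⦃s s' t' t : α⦄, S ≤ s → s ≤ s' → s' ≤ t' → t' ≤ t → t ≤ T → ρ s' t' ≤ ρ s t

namespace IsDominatedOn

theorem mono {X 𝕜 : Type*} [Mul 𝕜] [LE 𝕜] {s t : Set X} {f g : X → 𝕜}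
    (h : IsDominatedOn t f g) (hst : s ⊆ t) : IsDominatedOn s f g :=
  h.imp fun _ hC x hx => hC x (hst hx)

theorem of_subset_union {X 𝕜 : Type*} [Semiring 𝕜] [LinearOrder 𝕜] [IsOrderedRing 𝕜]
    {s t u : Set X} {f g : X → 𝕜} (hs : IsDominatedOn s f g) (ht : IsDominatedOn t f g)
    (hg : ∀ x ∈ u, 0 ≤ g x) (hu : u ⊆ s ∪ t) : IsDominatedOn u f g := by
  obtain ⟨C₁, hC₁⟩ := hs
  obtain ⟨C₂, hC₂⟩ := ht
  refine ⟨max C₁ C₂, fun x hx => ?_⟩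
  rcases hu hx with hxs | hxt
  · exact (hC₁ x hxs).trans (mul_le_mul_of_nonneg_right (le_max_left _ _) (hg x hx))
  · exact (hC₂ x hxt).trans (mul_le_mul_of_nonneg_right (le_max_right _ _) (hg x hx))

theorem of_le_of_pos_le {X 𝕜 : Type*} [Field 𝕜] [LinearOrder 𝕜] [IsStrictOrderedRing 𝕜] {s : Set X}
    {f g : X → 𝕜} {M c : 𝕜} (hf : ∀ x ∈ s, f x ≤ M) (hc : 0 < c) (hg : ∀ x ∈ s, c ≤ g x) :
    IsDominatedOn s f g := by
  refine ⟨|M| / c, fun x hx => ?_⟩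
  calc
    f x ≤ |M| := (hf x hx).trans (le_abs_self M)
    _ = |M| / c * c := (div_mul_cancel₀ _ hc.ne').symm
    _ ≤ |M| / c * g x := mul_le_mul_of_nonneg_left (hg x hx) (by positivity)

end IsDominatedOn

theorem IsControlOn.intervalMonotoneOn {S T : ℝ} {ω : ℝ → ℝ → ℝ} (hω : IsControlOn S T ω) :
    IntervalMonotoneOn S T ω := by
  intro s s' t' t hSs hss' hst' htt' htT
  have hSs' : S ≤ s' := hSs.trans hss'
  calc
    ω s' t' ≤ ω s' t' + ω t' t :=
      le_add_of_nonneg_right (hω.nonneg (hSs'.trans hst') htt' htT)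
    _ ≤ ω s' t := hω.superadditive hSs' hst' htt' htT
    _ ≤ ω s s' + ω s' t :=
      le_add_of_nonneg_left (hω.nonneg hSs hss' (hst'.trans (htt'.trans htT)))
    _ ≤ ω s t := hω.superadditive hSs hss' (hst'.trans htt') htT

theorem IsControlOn.intervalMonotoneOn_rpow {S T θ : ℝ} {ω : ℝ → ℝ → ℝ} (hω : IsControlOn S T ω)
    (hθ : 0 ≤ θ) : IntervalMonotoneOn S T fun s t => ω s t ^ θ :=
  fun _ _ _ _ hSs hss' hst' htt' htT =>
    Real.rpow_le_rpow (hω.nonneg (hSs.trans hss') hst' (htt'.trans htT))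
      (hω.intervalMonotoneOn hSs hss' hst' htt' htT) hθ

theorem patching_over_interlaced_cover_general {α 𝕜 : Type*} [LinearOrder α] [Field 𝕜]
    [LinearOrder 𝕜] [IsStrictOrderedRing 𝕜] {S T : α} {ρ : α → α → 𝕜}
    (hρ : IntervalMonotoneOn S T ρ) {l : ℕ} {a b : ℕ → α} (ha : a 0 ≤ S) (hb : T ≤ b l)
    (hoverlap : ∀ i < l, a (i + 1) ≤ b i) (hpos : ∀ i < l, 0 < ρ (a (i + 1)) (b i))
    {D : Set (α × α)} (hD : ∀ q ∈ D, S ≤ q.1 ∧ q.2 ≤ T) (hρD : ∀ q ∈ D, 0 ≤ ρ q.1 q.2)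
    {F : α × α → 𝕜} (hbdd : ∃ M, ∀ q ∈ D, F q ≤ M)
    (hloc : ∀ i ≤ l, IsDominatedOn {q ∈ D | a i ≤ q.1 ∧ q.2 ≤ b i} F fun q => ρ q.1 q.2) :
    IsDominatedOn D F fun q => ρ q.1 q.2 := by
  obtain ⟨M, hM⟩ := hbdd
  have hinitial : ∀ k ≤ l, IsDominatedOn {q ∈ D | q.2 ≤ b k} F fun q => ρ q.1 q.2 := by
    intro k hk
    induction k with
    | zero => exact (hloc 0 hk).mono fun q hq => ⟨hq.1, ha.trans (hD q hq.1).1, hq.2⟩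
    | succ k ih =>
      have hstraddle :
          IsDominatedOn {q ∈ D | q.1 ≤ a (k + 1) ∧ b k ≤ q.2} F fun q => ρ q.1 q.2 :=
        .of_le_of_pos_le (fun q hq => hM q hq.1) (hpos k hk) fun q hq =>
          hρ (hD q hq.1).1 hq.2.1 (hoverlap k hk) hq.2.2 (hD q hq.1).2
      have hbeyond : IsDominatedOn {q ∈ D | b k ≤ q.2 ∧ q.2 ≤ b (k + 1)} F fun q => ρ q.1 q.2 :=
        .of_subset_union (hloc (k + 1) hk) hstraddle (fun q hq => hρD q hq.1)
          fun q ⟨hqD, hbq, hqb⟩ => (le_total (a (k + 1)) q.1).imp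
            (fun haq => ⟨hqD, haq, hqb⟩) (fun hqa => ⟨hqD, hqa, hbq⟩)
      exact .of_subset_union (ih (Nat.le_of_succ_le hk)) hbeyond (fun q hq => hρD q hq.1)
        fun q ⟨hqD, hqb⟩ => (le_total q.2 (b k)).imp
          (fun hqk => ⟨hqD, hqk⟩) (fun hkq => ⟨hqD, hkq, hqb⟩)
  exact (hinitial l le_rfl).mono fun q hq => ⟨hq, (hD q hq).2.trans hb⟩

/-- **Patching lemma for estimates over an interlaced cover.**
If a bounded nonnegative function `F` on `D ⊆ Δ_{[S,T]}` satisfies `F(s,t) ≤ Cᵢ ω(s,t)^θ` on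
each interval `[aᵢ, bᵢ]` of an interlaced cover with `ω(a_{i+1}, bᵢ) > 0`, then a single
constant works on all of `D`. -/
theorem patching_over_interlaced_cover
    {S T : ℝ} (hST : S < T) {ω : ℝ → ℝ → ℝ} (hω : IsControlOn S T ω)
    {l : ℕ} {a b : ℕ → ℝ}
    (ha0 : a 0 = S) (hbl : b l = T)
    (hab : ∀ i ≤ l, a i < b i)
    (hinter : ∀ i < l, a i < a (i + 1) ∧ a (i + 1) < b i ∧ b i < b (i + 1))
    (hωpos : ∀ i < l, 0 < ω (a (i + 1)) (b i))
    {θ : ℝ} (hθ : 0 < θ)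
    {D : Set (ℝ × ℝ)} (hD : D ⊆ {q : ℝ × ℝ | S ≤ q.1 ∧ q.1 ≤ q.2 ∧ q.2 ≤ T})
    {F : ℝ × ℝ → ℝ} (hFnonneg : ∀ q ∈ D, 0 ≤ F q)
    (hFbdd : ∃ M : ℝ, ∀ q ∈ D, F q ≤ M)
    (hloc : ∀ i ≤ l, ∃ Ci : ℝ, ∀ q ∈ D, a i ≤ q.1 → q.2 ≤ b i → F q ≤ Ci * ω q.1 q.2 ^ θ) :
    ∃ C : ℝ, ∀ q ∈ D, F q ≤ C * ω q.1 q.2 ^ θ := by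
  have hω_rpow_nonneg : ∀ q ∈ D, 0 ≤ ω q.1 q.2 ^ θ := fun q hq =>
    Real.rpow_nonneg (hω.nonneg (hD hq).1 (hD hq).2.1 (hD hq).2.2) θ
  exact patching_over_interlaced_cover_general (hω.intervalMonotoneOn_rpow hθ.le) ha0.le hbl.ge
    (fun i hi => (hinter i hi).2.1.le) (fun i hi => Real.rpow_pos_of_pos (hωpos i hi) θ)
    (fun q hq => ⟨(hD hq).1, (hD hq).2.2⟩) hω_rpow_nonneg hFbdd
    fun i hi => (hloc i hi).imp fun _ hC q hq => hC q hq.1 hq.2.1 hq.2.2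
end
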